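/- arXiv:1709.02321 — 10 statements merged into one kernel-verified Lean document; each statement's English description precedes it below -/
import Mathlib

section
/- Suppose λ = 0 and q_Γ ≠ 0. Then there is exactly one boundary-layer charge profile, and it is given explicitly by q̃₁(ξ) = q_Γ l_C (√(D_{q,i} τ_i) l_C + √(D_{q,e} τ_e))⁻¹ · exp(−|ξ|/√(D_{q,i} τ_i)) for ξ < 0, and q̃₁(ξ) = q_Γ (√(D_{q,i} τ_i) l_C + √(D_{q,e} τ_e))⁻¹ · exp(−ξ/√(D_{q,e} τ_e)) for ξ > 0. -/
/-!
For `λ = 0` the equation on each half-line reads `q'' = k² q` with `k = 1 / √(D τ)`. The quantities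
`(q' + k q) e^{-k ξ}` and `(q' - k q) e^{k ξ}` are then constant, so `q` is a combination of
`e^{k ξ}` and `e^{-k ξ}`, and decay at infinity kills the growing exponential
(`eq_exp_of_decay_right`, and `eq_exp_of_decay_left` by reflection). Hence `q` is determined by its
two one-sided limits. The partition condition ties these limits together, and the total charge,
computed in `integral_two_sided_exp`, fixes the remaining constant because
`√(D_i τ_i) l_C + √(D_e τ_e) > 0`. Conversely, the two-sided exponential with these constants is a
profile.
-/

open MeasureTheory Filter Set

/-- A boundary-layer charge profile for the inner-layer charge equation
`D q'' − λ ξ q' − q/τ = 0` on each side of the interface, with partition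
condition `l_C q(0+) = q(0−)`, decay at infinity, and total charge `q_Γ`. -/
def IsBLProfile (Dqi Dqe τi τe lC lam qΓ : ℝ) (q : ℝ → ℝ) : Prop :=
  ∃ qm qp : ℝ,
    ContDiffOn ℝ 2 q (Iio 0) ∧
    ContDiffOn ℝ 2 q (Ioi 0) ∧
    Tendsto q (nhdsWithin 0 (Iio 0)) (nhds qm) ∧
    Tendsto q (nhdsWithin 0 (Ioi 0)) (nhds qp) ∧
    (∀ ξ < 0, Dqi * deriv (deriv q) ξ - lam * ξ * deriv q ξ - q ξ / τi = 0) ∧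
    (∀ ξ > 0, Dqe * deriv (deriv q) ξ - lam * ξ * deriv q ξ - q ξ / τe = 0) ∧
    lC * qp = qm ∧
    Tendsto q atTop (nhds 0) ∧
    Tendsto q atBot (nhds 0) ∧
    Integrable q ∧
    (∫ ξ, q ξ) = qΓ

/-- A decaying solution of `f'' = k² f` on the right half-line is a multiple of `e^{-k x}`. -/
lemma eq_exp_of_decay_right {f : ℝ → ℝ} {k : ℝ} (hk : 0 < k) (hf : ContDiffOn ℝ 2 f (Ioi 0))
    (hode : ∀ x > 0, deriv (deriv f) x = k ^ 2 * f x) (hlim : Tendsto f atTop (nhds 0)) :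
    ∃ C, ∀ x > 0, f x = C * Real.exp (-k * x) := by
  have h1 : ∀ x > 0, HasDerivAt f (deriv f x) x := fun x hx =>
    ((hf.differentiableOn (by norm_num)).differentiableAt (isOpen_Ioi.mem_nhds hx)).hasDerivAt
  have h2 : ∀ x > 0, HasDerivAt (deriv f) (k ^ 2 * f x) x := fun x hx => by
    rw [← hode x hx]
    exact (((hf.deriv_of_isOpen (m := 1) isOpen_Ioi (by norm_num)).differentiableOn
      (by norm_num)).differentiableAt (isOpen_Ioi.mem_nhds hx)).hasDerivAt
  have hexp : ∀ c x : ℝ, HasDerivAt (fun x => Real.exp (c * x)) (Real.exp (c * x) * c) x :=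
    fun c x => by simpa using ((hasDerivAt_id x).const_mul c).exp
  -- With `c = k` and `c = -k` this gives the two first integrals.
  have key : ∀ c : ℝ, c ^ 2 = k ^ 2 →
      ∃ A, ∀ x ∈ Ioi (0 : ℝ), (deriv f x + c * f x) * Real.exp (-c * x) = A := by
    intro c hc
    have hd : ∀ x > 0,
        HasDerivAt (fun x => (deriv f x + c * f x) * Real.exp (-c * x)) 0 x := fun x hx => by
      refine (((h2 x hx).fun_add ((h1 x hx).const_mul c)).fun_mul (hexp (-c) x)).congr_deriv ?_
      linear_combination (-(f x * Real.exp (-c * x))) * hc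
    exact isOpen_Ioi.exists_is_const_of_deriv_eq_zero isPreconnected_Ioi
      (fun x hx => (hd x hx).differentiableAt.differentiableWithinAt) (fun x hx => (hd x hx).deriv)
  obtain ⟨A, hA⟩ := key k rfl
  obtain ⟨B, hB⟩ := key (-k) (by ring)
  have hee : ∀ x, Real.exp (k * x) * Real.exp (-k * x) = 1 := fun x => by
    rw [← Real.exp_add]; simp
  have hsol : ∀ x > 0, 2 * k * (f x * Real.exp (-k * x))
      = A - B * (Real.exp (-k * x) * Real.exp (-k * x)) := fun x hx => by
    rw [← hA x hx, ← hB x hx, neg_neg]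
    linear_combination ((deriv f x - k * f x) * Real.exp (-k * x)) * hee x
  have he : Tendsto (fun x => Real.exp (-k * x)) atTop (nhds 0) :=
    Real.tendsto_exp_atBot.comp (tendsto_id.const_mul_atTop_of_neg (by linarith))
  have hA0 : A = 0 := by
    have l1 : Tendsto (fun x => 2 * k * (f x * Real.exp (-k * x))) atTop (nhds 0) := by
      simpa using (hlim.mul he).const_mul (2 * k)
    have l2 : Tendsto (fun x => A - B * (Real.exp (-k * x) * Real.exp (-k * x))) atTop (nhds A) := by
      simpa using ((he.mul he).const_mul B).const_sub A
    refine tendsto_nhds_unique (l2.congr' ?_) l1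
    filter_upwards [eventually_gt_atTop 0] with x hx using (hsol x hx).symm
  refine ⟨-B / (2 * k), fun x hx => ?_⟩
  have h3 := hsol x hx
  rw [hA0] at h3
  have h4 : (2 * k * f x + B * Real.exp (-k * x)) * Real.exp (-k * x) = 0 := by
    linear_combination h3
  have h5 := (mul_eq_zero.mp h4).resolve_right (Real.exp_pos _).ne'
  rw [div_mul_eq_mul_div, eq_div_iff (by positivity)]
  linear_combination h5

lemma eq_exp_of_decay_left {f : ℝ → ℝ} {k : ℝ} (hk : 0 < k) (hf : ContDiffOn ℝ 2 f (Iio 0))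
    (hode : ∀ x < 0, deriv (deriv f) x = k ^ 2 * f x) (hlim : Tendsto f atBot (nhds 0)) :
    ∃ C, ∀ x < 0, f x = C * Real.exp (k * x) := by
  obtain ⟨C, hC⟩ := eq_exp_of_decay_right (f := fun x => f (-x)) hk
    (hf.comp contDiff_neg.contDiffOn (fun x hx => by simpa using hx))
    (fun x hx => by
      have h : deriv (fun x => f (-x)) = fun x => -deriv f (-x) := by
        funext y; exact deriv_comp_neg f y
      rw [h, deriv.fun_neg, deriv_comp_neg, neg_neg]
      exact hode (-x) (by simpa using hx))
    (hlim.comp tendsto_neg_atTop_atBot)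
  refine ⟨C, fun x hx => ?_⟩
  simpa using hC (-x) (by simpa using hx)

/-- The value `q 0` is unconstrained, since the interface is a null set. -/
lemma integral_two_sided_exp {q : ℝ → ℝ} {k l A B : ℝ} (hk : 0 < k) (hl : 0 < l)
    (hm : ∀ x < 0, q x = A * Real.exp (k * x)) (hp : ∀ x > 0, q x = B * Real.exp (-l * x)) :
    Integrable q ∧ ∫ x, q x = A / k + B / l := by
  have hIm : IntegrableOn q (Iio 0) :=
    IntegrableOn.congr_fun
      (((integrableOn_exp_mul_Iic hk 0).mono_set Iio_subset_Iic_self).const_mul A)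
      (fun x hx => (hm x hx).symm) measurableSet_Iio
  have hIp : IntegrableOn q (Ioi 0) :=
    IntegrableOn.congr_fun ((integrableOn_exp_mul_Ioi (neg_lt_zero.mpr hl) 0).const_mul B)
      (fun x hx => (hp x hx).symm) measurableSet_Ioi
  have hIm' : IntegrableOn q (Iic 0) := by rwa [integrableOn_Iic_iff_integrableOn_Iio]
  constructor
  · rw [← integrableOn_univ, ← Iic_union_Ioi (a := (0 : ℝ))]
    exact hIm'.union hIp
  · rw [← intervalIntegral.integral_Iic_add_Ioi hIm' hIp, integral_Iic_eq_integral_Iio,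
      setIntegral_congr_fun measurableSet_Iio hm, setIntegral_congr_fun measurableSet_Ioi hp,
      integral_const_mul, integral_const_mul, ← integral_Iic_eq_integral_Iio,
      integral_exp_mul_Iic hk, integral_exp_mul_Ioi (neg_lt_zero.mpr hl)]
    simp [div_eq_mul_inv]

lemma deriv_eqOn_exp {f : ℝ → ℝ} {s : Set ℝ} (hs : IsOpen s) {C c : ℝ}
    (h : ∀ x ∈ s, f x = C * Real.exp (c * x)) :
    ∀ x ∈ s, deriv f x = C * c * Real.exp (c * x) := by
  intro x hx
  have h1 : f =ᶠ[nhds x] fun x => C * Real.exp (c * x) := by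
    filter_upwards [hs.mem_nhds hx] with y hy using h y hy
  rw [h1.deriv_eq]
  have h2 : HasDerivAt (fun x => C * Real.exp (c * x)) (C * (Real.exp (c * x) * c)) x := by
    simpa using (((hasDerivAt_id x).const_mul c).exp).const_mul C
  rw [h2.deriv]
  ring

lemma tendsto_zero_of_eqOn_exp {f : ℝ → ℝ} {s : Set ℝ} {C c : ℝ}
    (h : ∀ x ∈ s, f x = C * Real.exp (c * x)) : Tendsto f (nhdsWithin 0 s) (nhds C) := by
  have h1 : Continuous fun x : ℝ => C * Real.exp (c * x) := by fun_prop
  have h2 := (h1.tendsto 0).mono_left (nhdsWithin_le_nhds (s := s))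
  simp only [mul_zero, Real.exp_zero, mul_one] at h2
  refine h2.congr' ?_
  filter_upwards [self_mem_nhdsWithin] with x hx using (h x hx).symm

/-- When `λ = 0` and `q_Γ ≠ 0`, there is exactly one boundary-layer charge profile,
given by explicit decaying exponentials on each side of the interface. -/
theorem lambda_zero_unique_profile
    (Dqi Dqe τi τe lC qΓ : ℝ)
    (hDqi : 0 < Dqi) (hDqe : 0 < Dqe) (hτi : 0 < τi) (hτe : 0 < τe)
    (hlC : 0 < lC) (hqΓ : qΓ ≠ 0) :
    (∃ q : ℝ → ℝ, IsBLProfile Dqi Dqe τi τe lC 0 qΓ q) ∧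
    (∀ q : ℝ → ℝ, IsBLProfile Dqi Dqe τi τe lC 0 qΓ q →
      (∀ ξ < 0, q ξ =
        qΓ * lC / (Real.sqrt (Dqi * τi) * lC + Real.sqrt (Dqe * τe)) *
          Real.exp (-|ξ| / Real.sqrt (Dqi * τi))) ∧
      (∀ ξ > 0, q ξ =
        qΓ / (Real.sqrt (Dqi * τi) * lC + Real.sqrt (Dqe * τe)) *
          Real.exp (-ξ / Real.sqrt (Dqe * τe)))) := by
  have ha : 0 < Real.sqrt (Dqi * τi) := Real.sqrt_pos.mpr (mul_pos hDqi hτi)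
  have hb : 0 < Real.sqrt (Dqe * τe) := Real.sqrt_pos.mpr (mul_pos hDqe hτe)
  have ha2 : Real.sqrt (Dqi * τi) ^ 2 = Dqi * τi := Real.sq_sqrt (mul_pos hDqi hτi).le
  have hb2 : Real.sqrt (Dqe * τe) ^ 2 = Dqe * τe := Real.sq_sqrt (mul_pos hDqe hτe).le
  set a := Real.sqrt (Dqi * τi)
  set b := Real.sqrt (Dqe * τe)
  have hS : 0 < a * lC + b := by positivity
  have hk : 0 < a⁻¹ := inv_pos.mpr ha
  have hl : 0 < b⁻¹ := inv_pos.mpr hb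
  have hk2 : Dqi * a⁻¹ ^ 2 = 1 / τi := by
    rw [inv_pow, ha2]; field_simp
  have hl2 : Dqe * b⁻¹ ^ 2 = 1 / τe := by
    rw [inv_pow, hb2]; field_simp
  constructor
  · set A := qΓ * lC / (a * lC + b) with hAdef
    set B := qΓ / (a * lC + b) with hBdef
    let q : ℝ → ℝ := fun x => if x < 0 then A * Real.exp (a⁻¹ * x) else B * Real.exp (-b⁻¹ * x)
    have hm : ∀ x ∈ Iio (0 : ℝ), q x = A * Real.exp (a⁻¹ * x) := fun x hx => if_pos hx
    have hp : ∀ x ∈ Ioi (0 : ℝ), q x = B * Real.exp (-b⁻¹ * x) :=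
      fun x hx => if_neg (not_lt.mpr (le_of_lt hx))
    obtain ⟨hint, hval⟩ := integral_two_sided_exp hk hl hm hp
    refine ⟨q, A, B, ?_, ?_, tendsto_zero_of_eqOn_exp hm, tendsto_zero_of_eqOn_exp hp,
      ?_, ?_, ?_, ?_, ?_, hint, ?_⟩
    · exact ContDiffOn.congr (by fun_prop) hm
    · exact ContDiffOn.congr (by fun_prop) hp
    · intro x hx
      rw [deriv_eqOn_exp isOpen_Iio (deriv_eqOn_exp isOpen_Iio hm) x hx, hm x hx]
      linear_combination (A * Real.exp (a⁻¹ * x)) * hk2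
    · intro x hx
      rw [deriv_eqOn_exp isOpen_Ioi (deriv_eqOn_exp isOpen_Ioi hp) x hx, hp x hx]
      linear_combination (B * Real.exp (-b⁻¹ * x)) * hl2
    · rw [hAdef, hBdef]; ring
    · have h : Tendsto (fun x => B * Real.exp (-b⁻¹ * x)) atTop (nhds (B * 0)) :=
        (Real.tendsto_exp_atBot.comp
          (tendsto_id.const_mul_atTop_of_neg (neg_lt_zero.mpr hl))).const_mul B
      rw [mul_zero] at h
      refine h.congr' ?_
      filter_upwards [eventually_gt_atTop 0] with x hx using (hp x hx).symm
    · have h : Tendsto (fun x => A * Real.exp (a⁻¹ * x)) atBot (nhds (A * 0)) :=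
        (Real.tendsto_exp_atBot.comp (tendsto_id.const_mul_atBot hk)).const_mul A
      rw [mul_zero] at h
      refine h.congr' ?_
      filter_upwards [eventually_lt_atBot 0] with x hx using (hm x hx).symm
    · rw [hval, hAdef, hBdef]
      field_simp
  · rintro q ⟨qm, qp, hcm, hcp, hqm, hqp, hom, hop, hpart, htop, hbot, -, hval⟩
    obtain ⟨A, hA⟩ := eq_exp_of_decay_left (f := q) hk hcm (fun x hx => by
      refine mul_left_cancel₀ hDqi.ne' ?_
      linear_combination hom x hx - q x * hk2) hbot
    obtain ⟨B, hB⟩ := eq_exp_of_decay_right (f := q) hl hcp (fun x hx => by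
      refine mul_left_cancel₀ hDqe.ne' ?_
      linear_combination hop x hx - q x * hl2) htop
    have hAq : qm = A := tendsto_nhds_unique hqm (tendsto_zero_of_eqOn_exp hA)
    have hBq : qp = B := tendsto_nhds_unique hqp (tendsto_zero_of_eqOn_exp hB)
    rw [(integral_two_sided_exp hk hl hA hB).2, div_inv_eq_mul, div_inv_eq_mul] at hval
    subst hAq hBq
    have hBv : qp = qΓ / (a * lC + b) := by
      rw [eq_div_iff hS.ne']
      linear_combination hval + a * hpart
    have hAv : qm = qΓ * lC / (a * lC + b) := by
      rw [← hpart, hBv]; ring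
    refine ⟨fun x hx => ?_, fun x hx => ?_⟩
    · rw [hA x hx, ← hAv, abs_of_neg hx, neg_neg, div_eq_inv_mul]
    · rw [hB x hx, ← hBv, div_eq_inv_mul, mul_neg, neg_mul]
end

section
/- Suppose λ > 0, λ τ_max < 1, and q_Γ ≠ 0. Then there exists exactly one boundary-layer charge profile q̃₁; moreover q̃₁ has constant sign, namely q_Γ · q̃₁(ξ) > 0 for every ξ ≠ 0. -/
/-! The equation is linear and, since the coefficient of `q` is negative, it obeys a maximum
principle: a solution on a half-line that vanishes at the interface and at infinity has no positive
interior maximum, hence (applying this to its negative too) is zero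
(`HalfSol.nonpos_of_lim_zero`). So a half-line solution is determined
by its limit at the interface (`HalfSol.eq_mul`), and by the partition condition any profile is,
off the interface, a multiple of one with nonzero interface value; the total charge fixes the factor.

Existence rests on a Laplace transform. With `c = D / (2λ)` and `r = 1 / (λτ) - 1 > 0`,
`m x = ∫₀^∞ t ^ r * exp (-c t²) * exp (-x t) dt` is a positive solution on `x > 0`
(`laplaceGauss_ode`: the equation says that the integral of a total `t`-derivative vanishes). It
tends to zero, and it is integrable because it has the bounded antiderivative obtained by lowering
the exponent to `r - 1 > -1`, which is where `λτ < 1` is used. Gluing multiples of such solutions,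
reflected on the left, gives a profile with the sign of the charge. -/

open MeasureTheory Filter Set Asymptotics

/-! ### Half-line solutions and the maximum principle -/

/-- Decaying solutions on `(0, ∞)` of `D f'' - λ x f' - f / τ = 0` with limit `l` at `0+`.
Solutions on `(-∞, 0)` are encoded by their reflections. -/
structure HalfSol (D lam τ : ℝ) (f : ℝ → ℝ) (l : ℝ) : Prop where
  smooth : ContDiffOn ℝ 2 f (Ioi 0)
  lim_zero : Tendsto f (nhdsWithin 0 (Ioi 0)) (nhds l)
  ode : ∀ x > 0, D * deriv (deriv f) x - lam * x * deriv f x - f x / τ = 0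
  lim_top : Tendsto f atTop (nhds 0)

lemma HalfSol.hasDerivAt {D lam τ l : ℝ} {f : ℝ → ℝ} (h : HalfSol D lam τ f l) {x : ℝ}
    (hx : 0 < x) : HasDerivAt f (deriv f x) x :=
  ((h.smooth.differentiableOn (by norm_num)).differentiableAt (Ioi_mem_nhds hx)).hasDerivAt

lemma HalfSol.hasDerivAt_deriv {D lam τ l : ℝ} {f : ℝ → ℝ} (h : HalfSol D lam τ f l) {x : ℝ}
    (hx : 0 < x) : HasDerivAt (deriv f) (deriv (deriv f) x) x := by
  have h1 : ContDiffOn ℝ 1 (deriv f) (Ioi 0) :=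
    ((contDiffOn_succ_iff_deriv_of_isOpen (n := 1) isOpen_Ioi).1 h.smooth).2.2
  exact ((h1.differentiableOn (by norm_num)).differentiableAt (Ioi_mem_nhds hx)).hasDerivAt

lemma HalfSol.congr {D lam τ l : ℝ} {f g : ℝ → ℝ} (h : HalfSol D lam τ f l)
    (hfg : EqOn g f (Ioi 0)) : HalfSol D lam τ g l := by
  have hd : EqOn (deriv g) (deriv f) (Ioi 0) := hfg.deriv isOpen_Ioi
  have hdd : EqOn (deriv (deriv g)) (deriv (deriv f)) (Ioi 0) := hd.deriv isOpen_Ioi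
  refine ⟨h.smooth.congr hfg, h.lim_zero.congr' ?_, ?_, h.lim_top.congr' ?_⟩
  · filter_upwards [self_mem_nhdsWithin] with x hx using (hfg hx).symm
  · intro x hx
    rw [hdd hx, hd hx, hfg hx]
    exact h.ode x hx
  · filter_upwards [Ioi_mem_atTop 0] with x hx using (hfg hx).symm

lemma HalfSol.sub_mul {D lam τ l m : ℝ} {f g : ℝ → ℝ} (hf : HalfSol D lam τ f l)
    (hg : HalfSol D lam τ g m) (c : ℝ) :
    HalfSol D lam τ (fun x => f x - c * g x) (l - c * m) := by
  have hd : EqOn (deriv (fun x => f x - c * g x)) (fun x => deriv f x - c * deriv g x)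
      (Ioi 0) := fun x hx =>
    ((hf.hasDerivAt hx).sub ((hg.hasDerivAt hx).const_mul c)).deriv
  have hdd : EqOn (deriv (deriv (fun x => f x - c * g x)))
      (fun x => deriv (deriv f) x - c * deriv (deriv g) x) (Ioi 0) := fun x hx => by
    rw [hd.deriv isOpen_Ioi hx]
    exact ((hf.hasDerivAt_deriv hx).sub ((hg.hasDerivAt_deriv hx).const_mul c)).deriv
  refine ⟨hf.smooth.sub (contDiffOn_const.mul hg.smooth),
    hf.lim_zero.sub (hg.lim_zero.const_mul c), ?_, ?_⟩
  · intro x hx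
    rw [hdd hx, hd hx]
    linear_combination hf.ode x hx - c * hg.ode x hx
  · simpa using hf.lim_top.sub (hg.lim_top.const_mul c)

lemma halfSol_zero (D lam τ : ℝ) : HalfSol D lam τ (fun _ => 0) 0 :=
  ⟨contDiffOn_const, tendsto_const_nhds, by simp, tendsto_const_nhds⟩

lemma HalfSol.const_mul {D lam τ m : ℝ} {g : ℝ → ℝ} (hg : HalfSol D lam τ g m) (c : ℝ) :
    HalfSol D lam τ (fun x => c * g x) (c * m) := by
  simpa using (halfSol_zero D lam τ).sub_mul hg (-c)

/-- Maximum principle: at a positive interior maximum the equation forces `f'' > 0`, so the point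
would also be a local minimum and `f` locally constant, contradicting `f'' > 0`. -/
lemma HalfSol.nonpos_of_lim_zero {D lam τ : ℝ} (hD : 0 < D) (hτ : 0 < τ) {f : ℝ → ℝ}
    (h : HalfSol D lam τ f 0) {x : ℝ} (hx : 0 < x) : f x ≤ 0 := by
  by_contra! hpos
  let v : ℝ → ℝ := fun y => if 0 < y then f y else 0
  have hv : ∀ y, 0 < y → v y = f y := fun y hy => if_pos hy
  have hv0 : ∀ y, y ≤ 0 → v y = 0 := fun y hy => if_neg hy.not_gt
  have hvev : ∀ y, 0 < y → v =ᶠ[nhds y] f := fun y hy => by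
    filter_upwards [Ioi_mem_nhds hy] with z hz using hv z hz
  have hcont : Continuous v := by
    rw [continuous_iff_continuousAt]
    intro y
    rcases lt_trichotomy y 0 with hy | rfl | hy
    · have : v =ᶠ[nhds y] fun _ => 0 := by
        filter_upwards [Iio_mem_nhds hy] with z hz using hv0 z (le_of_lt hz)
      exact (continuousAt_const).congr this.symm
    · rw [continuousAt_iff_continuous_left'_right']
      constructor
      · refine Tendsto.congr' (f₁ := fun _ => (0 : ℝ)) ?_ ?_
        · filter_upwards [self_mem_nhdsWithin] with z hz using (hv0 z (le_of_lt hz)).symm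
        · rw [hv0 0 le_rfl]; exact tendsto_const_nhds
      · refine Tendsto.congr' (f₁ := f) ?_ ?_
        · filter_upwards [self_mem_nhdsWithin] with z hz using (hv z hz).symm
        · rw [hv0 0 le_rfl]; exact h.lim_zero
    · exact (h.hasDerivAt hy).continuousAt.congr (hvev y hy).symm
  have hvx : 0 < v x := by rw [hv x hx]; exact hpos
  obtain ⟨y, hy⟩ := hcont.exists_forall_ge' x (by
    rw [cocompact_eq_atBot_atTop, eventually_sup]
    constructor
    · filter_upwards [Iic_mem_atBot 0] with z hz
      rw [hv0 z hz]; exact hvx.le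
    · filter_upwards [h.lim_top.eventually (gt_mem_nhds hvx), Ioi_mem_atTop 0] with z hz hz0
      rw [hv z hz0]; exact le_of_lt hz)
  have hvy : 0 < v y := hvx.trans_le (hy x)
  have hy0 : 0 < y := by
    by_contra! hle
    rw [hv0 y hle] at hvy
    exact hvy.false
  have hfy : 0 < f y := hv y hy0 ▸ hvy
  have hmax : IsLocalMax f y := by
    filter_upwards [Ioi_mem_nhds hy0] with z hz
    rw [← hv z hz, ← hv y hy0]; exact hy z
  have hd : deriv f y = 0 := hmax.deriv_eq_zero
  have hode := h.ode y hy0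
  have hdd : 0 < deriv (deriv f) y := by
    rw [hd] at hode
    have : 0 < f y / τ := by positivity
    by_contra! hle
    nlinarith
  have hmin := isLocalMin_of_deriv_deriv_pos hdd hd (h.hasDerivAt hy0).continuousAt
  have hc : f =ᶠ[nhds y] fun _ => f y := by
    filter_upwards [hmax, hmin] with z h1 h2 using le_antisymm h1 h2
  have : deriv (deriv f) y = 0 := by
    rw [hc.deriv.deriv_eq]; simp
  exact hdd.ne' this

lemma HalfSol.eq_mul {D lam τ l m c : ℝ} (hD : 0 < D) (hτ : 0 < τ) {f g : ℝ → ℝ}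
    (hf : HalfSol D lam τ f l) (hg : HalfSol D lam τ g m) (hc : l = c * m) {x : ℝ}
    (hx : 0 < x) : f x = c * g x := by
  have h1 := hf.sub_mul hg c
  rw [sub_eq_zero.2 hc] at h1
  have h2 := h1.const_mul (-1)
  rw [mul_zero] at h2
  have := h1.nonpos_of_lim_zero hD hτ hx
  have := h2.nonpos_of_lim_zero hD hτ hx
  linarith

lemma halfSol_comp_neg_iff {D lam τ l : ℝ} {q : ℝ → ℝ} :
    HalfSol D lam τ (fun x => q (-x)) l ↔
      (ContDiffOn ℝ 2 q (Iio 0) ∧ Tendsto q (nhdsWithin 0 (Iio 0)) (nhds l) ∧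
        (∀ ξ < 0, D * deriv (deriv q) ξ - lam * ξ * deriv q ξ - q ξ / τ = 0) ∧
        Tendsto q atBot (nhds 0)) := by
  have hd : deriv (fun x => q (-x)) = fun x => -deriv q (-x) := by
    ext x; exact deriv_comp_neg q x
  have hdd : ∀ x, deriv (deriv (fun x => q (-x))) x = deriv (deriv q) (-x) := by
    intro x
    rw [hd, deriv.fun_neg, deriv_comp_neg, neg_neg]
  have hn1 : Tendsto (fun x : ℝ => -x) (nhdsWithin 0 (Ioi 0)) (nhdsWithin 0 (Iio 0)) := by
    simpa using tendsto_neg_nhdsGT (a := (0 : ℝ))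
  have hn2 : Tendsto (fun x : ℝ => -x) (nhdsWithin 0 (Iio 0)) (nhdsWithin 0 (Ioi 0)) := by
    simpa using tendsto_neg_nhdsLT (a := (0 : ℝ))
  constructor
  · intro h
    refine ⟨?_, ?_, ?_, ?_⟩
    · have := h.smooth.comp (s := Iio 0) (contDiff_neg.contDiffOn) (fun x hx => neg_pos.2 hx)
      simpa [Function.comp_def] using this
    · simpa [Function.comp_def] using h.lim_zero.comp hn2
    · intro ξ hξ
      have := h.ode (-ξ) (neg_pos.2 hξ)
      rw [hdd, hd] at this
      simp only [neg_neg] at this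
      linarith
    · simpa [Function.comp_def] using h.lim_top.comp tendsto_neg_atBot_atTop
  · rintro ⟨h1, h2, h3, h4⟩
    refine ⟨?_, h2.comp hn1, ?_, h4.comp tendsto_neg_atTop_atBot⟩
    · exact h1.comp (s := Ioi 0) (contDiff_neg.contDiffOn) fun x hx => (by simpa using hx)
    · intro x hx
      have := h3 (-x) (neg_lt_zero.2 hx)
      rw [hdd, hd]
      linarith

/-! ### The Laplace transform of a Gaussian times a power -/

/-- `∫₀^∞ t ^ s * exp (-c t²) * exp (-x t) dt`. Used for `s > -1`, `c > 0` and `x ≥ 0`, where the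
integral converges. -/
noncomputable def laplaceGauss (c s x : ℝ) : ℝ :=
  ∫ t in Ioi (0 : ℝ), t ^ s * Real.exp (-c * t ^ 2) * Real.exp (-x * t)

lemma aestronglyMeasurable_laplaceGauss (c s x : ℝ) :
    AEStronglyMeasurable (fun t : ℝ => t ^ s * Real.exp (-c * t ^ 2) * Real.exp (-x * t))
      (volume.restrict (Ioi 0)) := by
  apply Measurable.aestronglyMeasurable
  fun_prop

lemma norm_laplaceGauss_le (c s : ℝ) {x t : ℝ} (hx : 0 ≤ x) (ht : 0 < t) :
    ‖t ^ s * Real.exp (-c * t ^ 2) * Real.exp (-x * t)‖ ≤ t ^ s * Real.exp (-c * t ^ 2) := by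
  have h0 : 0 ≤ t ^ s * Real.exp (-c * t ^ 2) := by positivity
  rw [norm_mul, Real.norm_of_nonneg h0, Real.norm_of_nonneg (Real.exp_pos _).le]
  refine mul_le_of_le_one_right h0 (Real.exp_le_one_iff.2 ?_)
  nlinarith

lemma integrableOn_laplaceGauss {c s x : ℝ} (hc : 0 < c) (hs : -1 < s) (hx : 0 ≤ x) :
    IntegrableOn (fun t : ℝ => t ^ s * Real.exp (-c * t ^ 2) * Real.exp (-x * t)) (Ioi 0) := by
  refine Integrable.mono' (integrableOn_rpow_mul_exp_neg_mul_sq hc hs)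
    (aestronglyMeasurable_laplaceGauss c s x) ?_
  filter_upwards [ae_restrict_mem measurableSet_Ioi] with t ht
  exact norm_laplaceGauss_le c s hx ht

lemma setIntegral_Ioi_pos {f : ℝ → ℝ} (hf : ∀ t > 0, 0 < f t) (hi : IntegrableOn f (Ioi 0)) :
    0 < ∫ t in Ioi (0 : ℝ), f t := by
  rw [setIntegral_pos_iff_support_of_nonneg_ae _ hi]
  · have : Function.support f ∩ Ioi 0 = Ioi 0 :=
      inter_eq_right.2 fun t ht => (hf t ht).ne'
    rw [this]; simp
  · filter_upwards [ae_restrict_mem measurableSet_Ioi] with t ht using (hf t ht).le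

lemma laplaceGauss_pos {c s x : ℝ} (hc : 0 < c) (hs : -1 < s) (hx : 0 ≤ x) :
    0 < laplaceGauss c s x :=
  setIntegral_Ioi_pos (fun t ht => by
    have : (0 : ℝ) < t := ht
    positivity) (integrableOn_laplaceGauss hc hs hx)

lemma laplaceGauss_hasDerivAt {c s x : ℝ} (hc : 0 < c) (hs : -1 < s) (hx : 0 < x) :
    HasDerivAt (laplaceGauss c s) (-laplaceGauss c (s + 1) x) x := by
  have key := hasDerivAt_integral_of_dominated_loc_of_deriv_le (μ := volume.restrict (Ioi (0 : ℝ)))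
    (F := fun x t => t ^ s * Real.exp (-c * t ^ 2) * Real.exp (-x * t)) (x₀ := x)
    (F' := fun x t => -(t ^ (s + 1) * Real.exp (-c * t ^ 2) * Real.exp (-x * t)))
    (bound := fun t => t ^ (s + 1) * Real.exp (-c * t ^ 2))
    (Ioi_mem_nhds hx)
    (Eventually.of_forall fun y => aestronglyMeasurable_laplaceGauss c s y)
    (integrableOn_laplaceGauss hc hs hx.le)
    (aestronglyMeasurable_laplaceGauss c (s + 1) x).neg
    (by
      filter_upwards [ae_restrict_mem measurableSet_Ioi] with t ht y hy
      rw [norm_neg]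
      exact norm_laplaceGauss_le c (s + 1) (le_of_lt hy) ht)
    (integrableOn_rpow_mul_exp_neg_mul_sq hc (by linarith))
    (by
      filter_upwards [ae_restrict_mem measurableSet_Ioi] with t ht y hy
      have h1 : HasDerivAt (fun y : ℝ => -y * t) (-1 * t) y := (hasDerivAt_neg y).mul_const t
      refine (h1.exp.const_mul (t ^ s * Real.exp (-c * t ^ 2))).congr_deriv ?_
      rw [Real.rpow_add_one (ne_of_gt ht)]
      ring)
  have := key.2
  rw [integral_neg] at this
  exact this

lemma laplaceGauss_tendsto_zero {c s : ℝ} (hc : 0 < c) (hs : -1 < s) :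
    Tendsto (laplaceGauss c s) (nhdsWithin 0 (Ici 0)) (nhds (laplaceGauss c s 0)) := by
  refine tendsto_integral_filter_of_dominated_convergence
    (fun t => t ^ s * Real.exp (-c * t ^ 2))
    (Eventually.of_forall fun y => aestronglyMeasurable_laplaceGauss c s y) ?_
    (integrableOn_rpow_mul_exp_neg_mul_sq hc hs) ?_
  · filter_upwards [self_mem_nhdsWithin] with y hy
    filter_upwards [ae_restrict_mem measurableSet_Ioi] with t ht
    exact norm_laplaceGauss_le c s hy ht
  · refine Eventually.of_forall fun t => ?_
    have : Continuous fun y : ℝ => t ^ s * Real.exp (-c * t ^ 2) * Real.exp (-y * t) := by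
      fun_prop
    exact (this.tendsto 0).mono_left nhdsWithin_le_nhds

lemma laplaceGauss_tendsto_atTop {c s : ℝ} (hc : 0 < c) (hs : -1 < s) :
    Tendsto (laplaceGauss c s) atTop (nhds 0) := by
  have : Tendsto (laplaceGauss c s) atTop (nhds (∫ _ in Ioi (0 : ℝ), (0 : ℝ))) := by
    refine tendsto_integral_filter_of_dominated_convergence
      (fun t => t ^ s * Real.exp (-c * t ^ 2))
      (Eventually.of_forall fun y => aestronglyMeasurable_laplaceGauss c s y) ?_
      (integrableOn_rpow_mul_exp_neg_mul_sq hc hs) ?_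
    · filter_upwards [Ici_mem_atTop 0] with y hy
      filter_upwards [ae_restrict_mem measurableSet_Ioi] with t ht
      exact norm_laplaceGauss_le c s hy ht
    · filter_upwards [ae_restrict_mem measurableSet_Ioi] with t ht
      have h1 : Tendsto (fun y : ℝ => -y * t) atTop atBot :=
        tendsto_neg_atTop_atBot.atBot_mul_const ht
      simpa only [mul_zero, Function.comp_def] using
        (Real.tendsto_exp_atBot.comp h1).const_mul (t ^ s * Real.exp (-c * t ^ 2))
  simpa using this

lemma laplaceGauss_integrableOn {c s : ℝ} (hc : 0 < c) (hs : 0 < s) :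
    IntegrableOn (laplaceGauss c s) (Ioi 0) := by
  refine integrableOn_Ioi_deriv_of_nonneg (g := fun x => -laplaceGauss c (s - 1) x) (l := -0)
    (laplaceGauss_tendsto_zero hc (by linarith)).neg (fun x hx => ?_)
    (fun x hx => (laplaceGauss_pos hc (by linarith) (le_of_lt hx)).le)
    (laplaceGauss_tendsto_atTop hc (by linarith)).neg
  simpa using (laplaceGauss_hasDerivAt (s := s - 1) hc (by linarith) hx).fun_neg

/-- The combination is `∫₀^∞ -d/dt (t ^ (s + 1) * exp (-c t²) * exp (-x t)) dt`, and the boundary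
terms vanish. -/
lemma laplaceGauss_ode {c s x : ℝ} (hc : 0 < c) (hs : -1 < s) (hx : 0 < x) :
    2 * c * laplaceGauss c (s + 2) x + x * laplaceGauss c (s + 1) x
      - (s + 1) * laplaceGauss c s x = 0 := by
  have i0 := integrableOn_laplaceGauss hc hs hx.le
  have i1 := integrableOn_laplaceGauss hc (show -1 < s + 1 by linarith) hx.le
  have i2 := integrableOn_laplaceGauss hc (show -1 < s + 2 by linarith) hx.le
  have hint := (i0.const_mul (s + 1)).sub ((i2.const_mul (2 * c)).add (i1.const_mul x))
  have key := integral_Ioi_of_hasDerivAt_of_tendsto (a := 0) (m := 0)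
    (f := fun t : ℝ => t ^ (s + 1) * Real.exp (-c * t ^ 2) * Real.exp (-x * t)) ?_ ?_ hint ?_
  · rw [integral_sub' (i0.const_mul _) ((i2.const_mul _).add (i1.const_mul _)),
      integral_add' (i2.const_mul _) (i1.const_mul _), integral_const_mul, integral_const_mul,
      integral_const_mul, Real.zero_rpow (by linarith)] at key
    unfold laplaceGauss
    linarith
  · have h1 : ContinuousAt (fun t : ℝ => t ^ (s + 1)) 0 :=
      Real.continuousAt_rpow_const _ _ (Or.inr (by linarith))
    refine ContinuousAt.continuousWithinAt ?_
    fun_prop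
  · intro t ht
    have ht' : t ≠ 0 := ne_of_gt ht
    have h1 := Real.hasDerivAt_rpow_const (x := t) (p := s + 1) (Or.inl ht')
    have h2 := ((hasDerivAt_pow 2 t).const_mul (-c)).exp
    have h3 := ((hasDerivAt_id t).const_mul (-x)).exp
    refine ((h1.mul h2).mul h3).congr_deriv ?_
    have e1 : t ^ (s + 1) = t ^ s * t := Real.rpow_add_one ht' s
    have e2 : t ^ (s + 2) = t ^ s * t * t := by
      rw [show s + 2 = s + 1 + 1 by ring, Real.rpow_add_one ht', e1]
    simp [e1, e2]
    ring
  · refine squeeze_zero' (g := fun t : ℝ => t ^ (s + 1) * Real.exp (-x * t)) ?_ ?_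
      (tendsto_rpow_mul_exp_neg_mul_atTop_nhds_zero _ _ hx)
    · filter_upwards [Ioi_mem_atTop 0] with t ht
      have : (0 : ℝ) < t := ht
      positivity
    · filter_upwards [Ioi_mem_atTop 0] with t ht
      have : (0 : ℝ) < t := ht
      have h1 : Real.exp (-c * t ^ 2) ≤ 1 := Real.exp_le_one_iff.2 (by nlinarith [sq_nonneg t])
      have h2 : 0 ≤ t ^ (s + 1) := by positivity
      gcongr
      exact mul_le_of_le_one_right h2 h1

lemma laplaceGauss_contDiffOn {c s : ℝ} (hc : 0 < c) (hs : -1 < s) (n : ℕ) :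
    ContDiffOn ℝ n (laplaceGauss c s) (Ioi 0) := by
  induction n generalizing s with
  | zero =>
    rw [Nat.cast_zero, contDiffOn_zero]
    exact fun x hx => (laplaceGauss_hasDerivAt hc hs hx).continuousAt.continuousWithinAt
  | succ n ih =>
    rw [Nat.cast_succ, contDiffOn_succ_iff_deriv_of_isOpen isOpen_Ioi]
    refine ⟨fun x hx =>
      (laplaceGauss_hasDerivAt hc hs hx).differentiableAt.differentiableWithinAt, by simp, ?_⟩
    exact (ih (s := s + 1) (by linarith)).neg.congr
      fun x hx => (laplaceGauss_hasDerivAt hc hs hx).deriv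

lemma exists_pos_halfSol {D lam τ : ℝ} (hD : 0 < D) (hlam : 0 < lam) (hτ : 0 < τ)
    (h : lam * τ < 1) :
    ∃ m : ℝ → ℝ, HalfSol D lam τ m (m 0) ∧ (∀ x ≥ 0, 0 < m x) ∧ IntegrableOn m (Ioi 0) := by
  have hr : 0 < 1 / (lam * τ) - 1 := by
    rw [sub_pos, lt_div_iff₀ (by positivity)]; linarith
  obtain ⟨r, hr_def⟩ : ∃ r, r = 1 / (lam * τ) - 1 := ⟨_, rfl⟩
  rw [← hr_def] at hr
  obtain ⟨c, hc_def⟩ : ∃ c, c = D / (2 * lam) := ⟨_, rfl⟩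
  have hc : 0 < c := by rw [hc_def]; positivity
  refine ⟨laplaceGauss c r, ⟨laplaceGauss_contDiffOn hc (by linarith) 2,
    (laplaceGauss_tendsto_zero hc (by linarith)).mono_left (nhdsWithin_mono _ Ioi_subset_Ici_self),
    fun x hx => ?_, laplaceGauss_tendsto_atTop hc (by linarith)⟩,
    fun x hx => laplaceGauss_pos hc (by linarith) hx, laplaceGauss_integrableOn hc hr⟩
  have hd : EqOn (deriv (laplaceGauss c r)) (fun x => -laplaceGauss c (r + 1) x) (Ioi 0) :=
    fun y hy => (laplaceGauss_hasDerivAt hc (by linarith) hy).deriv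
  have hdd : deriv (deriv (laplaceGauss c r)) x = laplaceGauss c (r + 2) x := by
    rw [hd.deriv isOpen_Ioi hx]
    have := (laplaceGauss_hasDerivAt (s := r + 1) hc (by linarith) hx).neg.deriv
    rw [neg_neg, show r + 1 + 1 = r + 2 by ring] at this
    exact this
  rw [hdd, hd hx]
  have hode := laplaceGauss_ode (s := r) hc (by linarith) hx
  have e1 : lam * (2 * c) = D := by rw [hc_def]; field_simp
  have e2 : lam * (r + 1) = 1 / τ := by rw [hr_def]; field_simp; ring
  linear_combination lam * hode - laplaceGauss c (r + 2) x * e1 + laplaceGauss c r x * e2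

/-! ### Existence, sign and uniqueness of the profile -/

/-- When `λ > 0`, `λ τ_max < 1` and `q_Γ ≠ 0`, there is exactly one boundary-layer
charge profile, and it has the constant sign of `q_Γ` away from the interface. -/
theorem lambda_pos_unique_profile_sign
    (Dqi Dqe τi τe lC lam qΓ : ℝ)
    (hDqi : 0 < Dqi) (hDqe : 0 < Dqe) (hτi : 0 < τi) (hτe : 0 < τe)
    (hlC : 0 < lC) (hlam : 0 < lam) (hmax : lam * max τi τe < 1) (hqΓ : qΓ ≠ 0) :
    ∃ q : ℝ → ℝ, IsBLProfile Dqi Dqe τi τe lC lam qΓ q ∧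
      (∀ ξ : ℝ, ξ ≠ 0 → 0 < qΓ * q ξ) ∧
      (∀ q' : ℝ → ℝ, IsBLProfile Dqi Dqe τi τe lC lam qΓ q' →
        ∀ ξ : ℝ, ξ ≠ 0 → q' ξ = q ξ) := by
  have hli : lam * τi < 1 := lt_of_le_of_lt (by gcongr; exact le_max_left _ _) hmax
  have hle : lam * τe < 1 := lt_of_le_of_lt (by gcongr; exact le_max_right _ _) hmax
  obtain ⟨mi, hmi, hmi_pos, hmi_int⟩ := exists_pos_halfSol hDqi hlam hτi hli
  obtain ⟨me, hme, hme_pos, hme_int⟩ := exists_pos_halfSol hDqe hlam hτe hle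
  have hmi0 := hmi_pos 0 le_rfl
  have hme0 := hme_pos 0 le_rfl
  have hA := setIntegral_Ioi_pos (fun t ht => hme_pos t (le_of_lt ht)) hme_int
  have hB := setIntegral_Ioi_pos (fun t ht => hmi_pos t (le_of_lt ht)) hmi_int
  -- The weights `a * mi 0` and `a * (lC * me 0)` meet the partition condition, and `a` normalizes
  -- the total charge.
  let a : ℝ := qΓ / (mi 0 * (∫ t in Ioi (0 : ℝ), me t) + lC * me 0 * ∫ t in Ioi (0 : ℝ), mi t)
  have hden : 0 < mi 0 * (∫ t in Ioi (0 : ℝ), me t) + lC * me 0 * ∫ t in Ioi (0 : ℝ), mi t := by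
    positivity
  have ha : a * (mi 0 * (∫ t in Ioi (0 : ℝ), me t) + lC * me 0 * ∫ t in Ioi (0 : ℝ), mi t) = qΓ :=
    div_mul_cancel₀ _ hden.ne'
  have ha_sign : 0 < qΓ * a := by
    have : qΓ * a = qΓ ^ 2 /
        (mi 0 * (∫ t in Ioi (0 : ℝ), me t) + lC * me 0 * ∫ t in Ioi (0 : ℝ), mi t) := by
      simp only [a]; ring
    rw [this]; positivity
  have ha0 : a ≠ 0 := right_ne_zero_of_mul ha_sign.ne'
  let q : ℝ → ℝ := fun ξ => if 0 < ξ then a * mi 0 * me ξ else a * (lC * me 0) * mi (-ξ)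
  have hqp : ∀ ξ > 0, q ξ = a * mi 0 * me ξ := fun ξ hξ => if_pos hξ
  have hqm : ∀ ξ ≤ 0, q ξ = a * (lC * me 0) * mi (-ξ) := fun ξ hξ => if_neg hξ.not_gt
  have hR : HalfSol Dqe lam τe q (a * mi 0 * me 0) := (hme.const_mul (a * mi 0)).congr hqp
  have hL : HalfSol Dqi lam τi (fun x => q (-x)) (a * (lC * me 0) * mi 0) := by
    refine (hmi.const_mul (a * (lC * me 0))).congr fun x hx => ?_
    have := hqm (-x) (neg_nonpos.2 (le_of_lt hx))
    simpa using this
  have hiR : IntegrableOn q (Ioi 0) :=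
    IntegrableOn.congr_fun (hme_int.const_mul (a * mi 0)) (fun x hx => (hqp x hx).symm) measurableSet_Ioi
  have hiL : IntegrableOn q (Iic 0) := by
    have h1 : IntegrableOn (fun x => mi (-x)) (Iio 0) :=
      IntegrableOn.comp_neg_Iio (by simpa using hmi_int)
    rw [integrableOn_Iic_iff_integrableOn_Iio]
    exact IntegrableOn.congr_fun (h1.const_mul (a * (lC * me 0))) (fun x hx => (hqm x (le_of_lt hx)).symm)
      measurableSet_Iio
  have hint : Integrable q := by
    rw [← integrableOn_univ, ← Iic_union_Ioi (a := (0 : ℝ))]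
    exact hiL.union hiR
  have hval : ∫ ξ, q ξ = qΓ := by
    rw [← intervalIntegral.integral_Iic_add_Ioi hiL hiR,
      setIntegral_congr_fun measurableSet_Ioi hqp, setIntegral_congr_fun measurableSet_Iic hqm,
      integral_const_mul, integral_const_mul, integral_comp_neg_Iic, neg_zero]
    rw [← ha]; ring
  obtain ⟨hL1, hL2, hL3, hL4⟩ := halfSol_comp_neg_iff.1 hL
  refine ⟨q, ⟨_, _, hL1, hR.smooth, hL2, hR.lim_zero, hL3, hR.ode, by ring, hR.lim_top, hL4,
    hint, hval⟩, ?_, ?_⟩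
  · intro ξ hξ
    rcases hξ.lt_or_gt with hneg | hpos
    · rw [hqm ξ hneg.le]
      have := hmi_pos (-ξ) (neg_nonneg.2 hneg.le)
      rw [show qΓ * (a * (lC * me 0) * mi (-ξ)) = (qΓ * a) * ((lC * me 0) * mi (-ξ)) by ring]
      positivity
    · rw [hqp ξ hpos]
      have := hme_pos ξ hpos.le
      rw [show qΓ * (a * mi 0 * me ξ) = (qΓ * a) * (mi 0 * me ξ) by ring]
      positivity
  · rintro q' ⟨qm, qp, g1, g2, g3, g4, g5, g6, g7, g8, g9, -, g11⟩
    have hR' : HalfSol Dqe lam τe q' qp := ⟨g2, g4, g6, g8⟩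
    have hL' : HalfSol Dqi lam τi (fun x => q' (-x)) qm := halfSol_comp_neg_iff.2 ⟨g1, g3, g5, g9⟩
    obtain ⟨c, hc⟩ : ∃ c, qp = c * (a * mi 0 * me 0) :=
      ⟨qp / (a * mi 0 * me 0), by field_simp⟩
    have hmul : ∀ ξ : ℝ, ξ ≠ 0 → q' ξ = c * q ξ := by
      intro ξ hξ
      rcases hξ.lt_or_gt with hneg | hpos
      · have := hL'.eq_mul hDqi hτi hL (c := c) (by rw [← g7, hc]; ring) (neg_pos.2 hneg)
        simpa using this
      · exact hR'.eq_mul hDqe hτe hR hc hpos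
    have hc1 : qΓ = c * qΓ := by
      conv_lhs => rw [← g11]
      rw [← hval, ← integral_const_mul]
      refine integral_congr_ae ?_
      filter_upwards [compl_mem_ae_iff.2 (measure_singleton (0 : ℝ))] with ξ hξ using hmul ξ hξ
    have : c = 1 := mul_right_cancel₀ hqΓ (by rw [← hc1, one_mul])
    intro ξ hξ
    rw [hmul ξ hξ, this, one_mul]
end

section
/- Suppose λ > 0, λ τ_max ≥ 1, and q_Γ ≠ 0. Then no boundary-layer charge profile exists. -/
/-!
Reflecting the left half-line, both sides satisfy `D q'' - λ x q' - k q = 0` on `(0, ∞)` with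
`k = 1/τ > 0`. The function `q q' exp (-λ x² / (2D))` has nonnegative derivative there, so if
`q q'` were positive somewhere it would stay positive, and `q²` would increase from a positive
value, contradicting `q → 0`. Hence `q q' ≤ 0` and `q²` is nonincreasing (`HalfProfile.antitone_sq`);
in particular `q(0+) = 0` forces `q = 0` on that side (`HalfProfile.eq_zero_of_tendsto_zero`).

If moreover `λ τ ≥ 1` and `q` is positive at some point `a`, then `q ≥ 0` and `q' ≤ 0` on `[a, ∞)`,
and the flux `D q' - λ x q`, whose derivative is `(k - λ) q ≤ 0`, stays below a constant `-c < 0`.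
Dividing by `x` gives `λ q ≥ c / x + (D / a) q'`, so `∫ q` diverges like `(c/λ) log x`
(`HalfProfile.not_pos`). An integrable solution therefore vanishes on the side with the larger
relaxation time; the partition condition transmits the zero boundary value to the other side,
where `q` vanishes as well. The total charge is then zero.
-/

open MeasureTheory Filter Set Asymptotics

/-- A decaying solution of `D q'' - λ x q' - k q = 0` on the half-line `(0, ∞)`. Its behaviour
at `0` is left free. -/
structure HalfProfile (D lam k : ℝ) (q : ℝ → ℝ) : Prop where
  diff : ∀ x > 0, DifferentiableAt ℝ q x
  diff' : ∀ x > 0, DifferentiableAt ℝ (deriv q) x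
  ode : ∀ x > 0, D * deriv (deriv q) x - lam * x * deriv q x - k * q x = 0
  lim : Tendsto q atTop (nhds 0)

namespace HalfProfile

variable {D lam k : ℝ} {q : ℝ → ℝ}

lemma neg (h : HalfProfile D lam k q) : HalfProfile D lam k (fun x => -q x) := by
  have e : deriv (fun x => -q x) = fun x => -deriv q x := by
    funext x; exact deriv.fun_neg
  refine ⟨fun x hx => (h.diff x hx).neg, fun x hx => ?_, fun x hx => ?_, by simpa using h.lim.neg⟩
  · rw [e]; exact (h.diff' x hx).neg
  · have := h.ode x hx
    rw [e, deriv.fun_neg]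
    linarith

lemma hasDerivAt_sq (h : HalfProfile D lam k q) {x : ℝ} (hx : 0 < x) :
    HasDerivAt (fun y => q y ^ 2) (2 * (q x * deriv q x)) x := by
  refine ((h.diff x hx).hasDerivAt.fun_pow 2).congr_deriv ?_
  norm_num; ring

lemma mul_deriv_nonpos (h : HalfProfile D lam k q) (hD : 0 < D) (hk : 0 < k) {x : ℝ}
    (hx : 0 < x) : q x * deriv q x ≤ 0 := by
  by_contra! hc
  let E : ℝ → ℝ := fun y => Real.exp (-(lam / (2 * D)) * y ^ 2)
  have hE : ∀ y, HasDerivAt E (E y * (-(lam / D) * y)) y := by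
    intro y
    refine (((hasDerivAt_id y).fun_pow 2).const_mul (-(lam / (2 * D)))).exp.congr_deriv ?_
    change E y * _ = _
    simp only [id]
    field_simp
    norm_num
  have hg : ∀ y > 0, HasDerivAt (fun y => q y * deriv q y * E y)
      (E y * (deriv q y ^ 2 + k / D * q y ^ 2)) y := by
    intro y hy
    refine (((h.diff y hy).hasDerivAt.fun_mul (h.diff' y hy).hasDerivAt).fun_mul
      (hE y)).congr_deriv ?_
    have h2 : deriv (deriv q) y = (lam * y * deriv q y + k * q y) / D := by
      rw [eq_div_iff hD.ne']; linarith [h.ode y hy]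
    rw [h2]; field_simp; ring
  have hmono : MonotoneOn (fun y => q y * deriv q y * E y) (Ioi 0) := by
    refine monotoneOn_of_hasDerivWithinAt_nonneg (convex_Ioi 0)
      (fun y hy => (hg y hy).continuousAt.continuousWithinAt)
      (fun y hy => (hg y (interior_subset hy)).hasDerivWithinAt) (fun y _ => ?_)
    have : 0 < E y := Real.exp_pos _
    positivity
  have hpos : ∀ y, x ≤ y → 0 ≤ q y * deriv q y := by
    intro y hy
    have h1 : q x * deriv q x * E x ≤ q y * deriv q y * E y :=
      hmono hx (hx.trans_le hy) hy
    have h2 : 0 < q x * deriv q x * E x := mul_pos hc (Real.exp_pos _)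
    exact (pos_of_mul_pos_left (h2.trans_le h1) (Real.exp_pos _).le).le
  have hsq : MonotoneOn (fun y => q y ^ 2) (Ici x) := by
    refine monotoneOn_of_hasDerivWithinAt_nonneg (convex_Ici x)
      (fun y hy => (h.hasDerivAt_sq (hx.trans_le hy)).continuousAt.continuousWithinAt)
      (fun y hy => (h.hasDerivAt_sq (hx.trans_le (interior_subset hy))).hasDerivWithinAt)
      (fun y hy => ?_)
    have := hpos y (interior_subset hy)
    positivity
  have hle : q x ^ 2 ≤ 0 := by
    have hl : Tendsto (fun y => q y ^ 2) atTop (nhds 0) := by simpa using h.lim.pow 2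
    exact ge_of_tendsto hl ((eventually_ge_atTop x).mono fun y hy => hsq self_mem_Ici hy hy)
  have h0 : q x = 0 := by nlinarith
  simp [h0] at hc

lemma antitone_sq (h : HalfProfile D lam k q) (hD : 0 < D) (hk : 0 < k) :
    AntitoneOn (fun y => q y ^ 2) (Ioi 0) := by
  refine antitoneOn_of_hasDerivWithinAt_nonpos (convex_Ioi 0)
    (fun y hy => (h.hasDerivAt_sq hy).continuousAt.continuousWithinAt)
    (fun y hy => (h.hasDerivAt_sq (interior_subset hy)).hasDerivWithinAt)
    (fun y hy => ?_)
  linarith [h.mul_deriv_nonpos hD hk (interior_subset hy : y ∈ Ioi (0 : ℝ))]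

lemma eq_zero_of_tendsto_zero (h : HalfProfile D lam k q) (hD : 0 < D) (hk : 0 < k)
    (h0 : Tendsto q (nhdsWithin 0 (Ioi 0)) (nhds 0)) {x : ℝ} (hx : 0 < x) : q x = 0 := by
  have hl : Tendsto (fun y => q y ^ 2) (nhdsWithin 0 (Ioi 0)) (nhds 0) := by
    simpa using h0.pow 2
  have hle : q x ^ 2 ≤ 0 := by
    refine ge_of_tendsto hl ?_
    filter_upwards [Ioo_mem_nhdsGT hx] with y hy
    exact h.antitone_sq hD hk hy.1 hx hy.2.le
  nlinarith

/-- Since `q²` is nonincreasing, `q` cannot change sign to the right of a zero. -/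
lemma nonneg_of_pos (h : HalfProfile D lam k q) (hD : 0 < D) (hk : 0 < k) {a : ℝ} (ha : 0 < a)
    (hqa : 0 < q a) {x : ℝ} (hx : a ≤ x) : 0 ≤ q x := by
  by_contra! hc
  have hcont : ContinuousOn q (Icc a x) := fun y hy =>
    (h.diff y (ha.trans_le hy.1)).continuousAt.continuousWithinAt
  obtain ⟨z, hz, hz0⟩ := intermediate_value_Icc' hx hcont ⟨hc.le, hqa.le⟩
  have := h.antitone_sq hD hk (ha.trans_le hz.1) (ha.trans_le hx) hz.2
  simp only [hz0] at this
  nlinarith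

lemma deriv_nonpos_of_pos (h : HalfProfile D lam k q) (hD : 0 < D) (hk : 0 < k) {a : ℝ}
    (ha : 0 < a) (hqa : 0 < q a) {x : ℝ} (hx : a ≤ x) : deriv q x ≤ 0 := by
  have hm := h.mul_deriv_nonpos hD hk (ha.trans_le hx)
  rcases (h.nonneg_of_pos hD hk ha hqa hx).eq_or_lt with h0 | h0
  · have hax : a < x := hx.lt_of_ne (by rintro rfl; linarith)
    -- a zero of `q` beyond `a` is an interior minimum
    have hmin : IsLocalMin q x := by
      filter_upwards [Ioi_mem_nhds hax] with y hy
      rw [← h0]; exact h.nonneg_of_pos hD hk ha hqa (le_of_lt hy)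
    exact hmin.deriv_eq_zero.le
  · by_contra! hc
    linarith [mul_pos h0 hc]

/-- When `k ≤ λ`, a solution that is positive somewhere decays no faster than `1/x` and is
not integrable. -/
lemma not_pos (h : HalfProfile D lam k q) (hD : 0 < D) (hk : 0 < k) (hlam : 0 < lam)
    (hkl : k ≤ lam) (hint : Integrable q) {a : ℝ} (ha : 0 < a) : ¬ 0 < q a := by
  intro hqa
  have hnn : ∀ x, a ≤ x → 0 ≤ q x := fun x hx => h.nonneg_of_pos hD hk ha hqa hx
  have hd : ∀ x, a ≤ x → deriv q x ≤ 0 := fun x hx => h.deriv_nonpos_of_pos hD hk ha hqa hx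
  have hF : ∀ x > 0, HasDerivAt (fun x => D * deriv q x - lam * x * q x) ((k - lam) * q x) x := by
    intro x hx
    refine (((h.diff' x hx).hasDerivAt.const_mul D).fun_sub
      (((hasDerivAt_id x).const_mul lam).fun_mul (h.diff x hx).hasDerivAt)).congr_deriv ?_
    simp only [id]
    linarith [h.ode x hx]
  have hFanti : AntitoneOn (fun x => D * deriv q x - lam * x * q x) (Ici a) := by
    refine antitoneOn_of_hasDerivWithinAt_nonpos (convex_Ici a)
      (fun y hy => (hF y (ha.trans_le hy)).continuousAt.continuousWithinAt)
      (fun y hy => (hF y (ha.trans_le (interior_subset hy))).hasDerivWithinAt)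
      (fun y hy => ?_)
    exact mul_nonpos_of_nonpos_of_nonneg (by linarith) (hnn y (interior_subset hy))
  obtain ⟨c, hc⟩ : ∃ c, c = -(D * deriv q a - lam * a * q a) := ⟨_, rfl⟩
  have hcpos : 0 < c := by
    have h1 : D * deriv q a ≤ 0 := mul_nonpos_of_nonneg_of_nonpos hD.le (hd a le_rfl)
    have h2 : 0 < lam * a * q a := by positivity
    linarith
  have hG : ∀ x > 0, HasDerivAt
      (fun x => c * Real.log x + D / a * q x - lam * ∫ t in a..x, q t)
      (c * x⁻¹ + D / a * deriv q x - lam * q x) x := by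
    intro x hx
    have hcont := (h.diff x hx).continuousAt
    refine (((Real.hasDerivAt_log hx.ne').const_mul c).fun_add
      ((h.diff x hx).hasDerivAt.const_mul (D / a))).fun_sub (HasDerivAt.const_mul lam ?_)
    exact intervalIntegral.integral_hasDerivAt_right hint.intervalIntegrable
      hint.aestronglyMeasurable.stronglyMeasurableAtFilter hcont
  have hGanti : AntitoneOn
      (fun x => c * Real.log x + D / a * q x - lam * ∫ t in a..x, q t) (Ici a) := by
    refine antitoneOn_of_hasDerivWithinAt_nonpos (convex_Ici a)
      (fun y hy => (hG y (ha.trans_le hy)).continuousAt.continuousWithinAt)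
      (fun y hy => (hG y (ha.trans_le (interior_subset hy))).hasDerivWithinAt)
      (fun y hy => ?_)
    have hy : a ≤ y := interior_subset hy
    have hy0 : 0 < y := ha.trans_le hy
    have h1 : D * deriv q y - lam * y * q y ≤ -c := by
      have := hFanti self_mem_Ici hy hy
      simp only at this
      linarith
    have h2 : D / a * deriv q y ≤ D / y * deriv q y :=
      mul_le_mul_of_nonpos_right (div_le_div_of_nonneg_left hD.le ha hy) (hd y hy)
    have h3 : c * y⁻¹ + D / y * deriv q y - lam * q y
        = (c + (D * deriv q y - lam * y * q y)) / y := by field_simp; ring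
    have h4 : (c + (D * deriv q y - lam * y * q y)) / y ≤ 0 :=
      div_nonpos_of_nonpos_of_nonneg (by linarith) hy0.le
    linarith
  have hbound : ∀ x, a ≤ x →
      c * Real.log x ≤ c * Real.log a + D / a * q a + lam * ∫ t, |q t| := by
    intro x hx
    have h1 := hGanti self_mem_Ici hx hx
    simp only [intervalIntegral.integral_same] at h1
    have h2 : ∫ t in a..x, q t ≤ ∫ t, |q t| := by
      rw [intervalIntegral.integral_of_le hx]
      calc ∫ t in Ioc a x, q t ≤ ∫ t in Ioc a x, |q t| :=
            integral_mono hint.integrableOn hint.abs.integrableOn fun t => le_abs_self _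
        _ ≤ ∫ t, |q t| := setIntegral_le_integral hint.abs
            (Eventually.of_forall fun t => abs_nonneg _)
    have h3 : 0 ≤ D / a * q x := mul_nonneg (by positivity) (hnn x hx)
    have h4 := mul_le_mul_of_nonneg_left h2 hlam.le
    linarith
  have hlog := (Real.tendsto_log_atTop.const_mul_atTop hcpos).eventually_gt_atTop
    (c * Real.log a + D / a * q a + lam * ∫ t, |q t|)
  obtain ⟨x, hx1, hx2⟩ := (hlog.and (eventually_ge_atTop a)).exists
  exact (hbound x hx2).not_gt hx1

lemma eq_zero_of_integrable (h : HalfProfile D lam k q) (hD : 0 < D) (hk : 0 < k) (hlam : 0 < lam)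
    (hkl : k ≤ lam) (hint : Integrable q) {x : ℝ} (hx : 0 < x) : q x = 0 := by
  have h1 := h.not_pos hD hk hlam hkl hint hx
  have h2 := h.neg.not_pos hD hk hlam hkl hint.neg hx
  linarith

end HalfProfile

lemma ContDiffOn.differentiableAt_and_deriv {q : ℝ → ℝ} {s : Set ℝ} (hs : IsOpen s)
    (h : ContDiffOn ℝ 2 q s) {x : ℝ} (hx : x ∈ s) :
    DifferentiableAt ℝ q x ∧ DifferentiableAt ℝ (deriv q) x := by
  refine ⟨(h.differentiableOn two_ne_zero).differentiableAt (hs.mem_nhds hx), ?_⟩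
  have h1 : ContDiffOn ℝ 1 (deriv q) s := h.deriv_of_isOpen hs (by norm_num)
  exact (h1.differentiableOn one_ne_zero).differentiableAt (hs.mem_nhds hx)

/-- When `λ > 0`, `λ τ_max ≥ 1` and `q_Γ ≠ 0`, no boundary-layer charge
profile exists: convective charge accumulation overwhelms bulk relaxation. -/
theorem lambda_pos_no_profile
    (Dqi Dqe τi τe lC lam qΓ : ℝ)
    (hDqi : 0 < Dqi) (hDqe : 0 < Dqe) (hτi : 0 < τi) (hτe : 0 < τe)
    (hlC : 0 < lC) (hlam : 0 < lam) (hmax : 1 ≤ lam * max τi τe) (hqΓ : qΓ ≠ 0) :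
    ¬ ∃ q : ℝ → ℝ, IsBLProfile Dqi Dqe τi τe lC lam qΓ q := by
  rintro ⟨q, qm, qp, hcm, hcp, hm, hp, hom, hop, hpart, htop, hbot, hint, hQ⟩
  have hR : HalfProfile Dqe lam (1 / τe) q :=
    ⟨fun x hx => (hcp.differentiableAt_and_deriv isOpen_Ioi hx).1,
      fun x hx => (hcp.differentiableAt_and_deriv isOpen_Ioi hx).2,
      fun x hx => by linarith [hop x hx, div_eq_inv_mul (q x) τe, one_div τe,
        one_div_mul_eq_div τe (q x)], htop⟩
  have hL : HalfProfile Dqi lam (1 / τi) (fun x => q (-x)) := by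
    have e1 : deriv (fun x => q (-x)) = fun x => -deriv q (-x) := by
      funext x; exact deriv_comp_neg q x
    have e2 : ∀ x, deriv (fun x => -deriv q (-x)) x = deriv (deriv q) (-x) := by
      intro x
      rw [deriv.fun_neg, deriv_comp_neg (deriv q) x, neg_neg]
    have hd : ∀ x > 0, DifferentiableAt ℝ q (-x) ∧ DifferentiableAt ℝ (deriv q) (-x) :=
      fun x hx => hcm.differentiableAt_and_deriv isOpen_Iio (neg_lt_zero.mpr hx)
    refine ⟨fun x hx => (hd x hx).1.comp x differentiable_neg.differentiableAt, fun x hx => ?_,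
      fun x hx => ?_, hbot.comp tendsto_neg_atTop_atBot⟩
    · rw [e1]
      exact ((hd x hx).2.comp x differentiable_neg.differentiableAt).neg
    · rw [e1, e2]
      have := hom (-x) (neg_lt_zero.mpr hx)
      rw [one_div_mul_eq_div]
      linarith
  have hm' : Tendsto (fun x => q (-x)) (nhdsWithin 0 (Ioi 0)) (nhds qm) := by
    refine hm.comp ?_
    have := tendsto_neg_nhdsGT (a := (0 : ℝ))
    simpa using this
  have hke : 0 < 1 / τe := by positivity
  have hki : 0 < 1 / τi := by positivity
  have hzero : (∀ x > 0, q x = 0) ∧ ∀ x > 0, q (-x) = 0 := by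
    rcases le_total τi τe with hle | hle
    · rw [max_eq_right hle] at hmax
      have hz : ∀ x > 0, q x = 0 := fun x hx =>
        hR.eq_zero_of_integrable hDqe hke hlam ((div_le_iff₀ hτe).mpr hmax) hint hx
      have hqp : qp = 0 := tendsto_nhds_unique (hp.congr' (by
        filter_upwards [self_mem_nhdsWithin] with x hx using hz x hx)) tendsto_const_nhds
      have hqm : qm = 0 := by rw [← hpart, hqp, mul_zero]
      exact ⟨hz, fun x hx => hL.eq_zero_of_tendsto_zero hDqi hki (hqm ▸ hm') hx⟩
    · rw [max_eq_left hle] at hmax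
      have hz : ∀ x > 0, q (-x) = 0 := fun x hx =>
        hL.eq_zero_of_integrable hDqi hki hlam ((div_le_iff₀ hτi).mpr hmax) hint.comp_neg hx
      have hqm : qm = 0 := tendsto_nhds_unique (hm'.congr' (by
        filter_upwards [self_mem_nhdsWithin] with x hx using hz x hx)) tendsto_const_nhds
      have hqp : qp = 0 := by
        rw [hqm] at hpart
        exact (mul_eq_zero.mp hpart).resolve_left hlC.ne'
      exact ⟨fun x hx => hR.eq_zero_of_tendsto_zero hDqe hke (hqp ▸ hp) hx, hz⟩
  -- `q 0` is unconstrained, but a single point does not affect the integral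
  have hae : q =ᵐ[volume] fun _ => 0 := by
    filter_upwards [Measure.ae_ne volume (0 : ℝ)] with x hx
    rcases lt_or_gt_of_ne hx with h | h
    · simpa using hzero.2 (-x) (neg_pos.mpr h)
    · exact hzero.1 x h
  rw [integral_congr_ae hae, integral_zero] at hQ
  exact hqΓ hQ.symm
end

section
/- Suppose λ < 0 and q_Γ ≠ 0. Then there exists exactly one boundary-layer charge profile q̃₁; it has constant sign (q_Γ · q̃₁(ξ) > 0 for ξ ≠ 0), and there exist positive constants C⁻_i and C⁻_e such that q̃₁(ξ) = q_Γ C⁻_i |ξ|^{−1/(|λ| τ_i) − 1} exp(−|λ| ξ²/(2 D_{q,i})) (1 + O(ξ⁻²)) as ξ → −∞ and q̃₁(ξ) = q_Γ C⁻_e ξ^{−1/(|λ| τ_e) − 1} exp(−|λ| ξ²/(2 D_{q,e})) (1 + O(ξ⁻²)) as ξ → +∞. -/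
/-!
Write `κ = |λ| / D` and `p = 1 / (|λ| τ)`. On each half-line, after the reflection `ξ ↦ -ξ` on the
left, the equation reads `u'' / κ + ξ u' - p u = 0` on `(0, ∞)`, and its recessive solution is
explicit: `u ξ = ∫₀^∞ s^p exp(-κ (s + ξ)² / 2) ds` (`blF`). Differentiation under the integral sign
and one integration by parts in `s` give the equation (`blF_ode`); factoring out `exp(-κ ξ² / 2)`
and comparing with a Gamma integral gives the decay law with its `O(ξ⁻²)` relative error
(`blF_asymp`). Positivity and integrability are immediate from the formula.

Since `p > 0`, the maximum principle holds on the half-line (`halfLine_nonpos`), so a decaying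
solution is determined by its limit at `0`. A profile is therefore determined by its right limit
`c`, its left limit being `l_C c`, and its total charge is `c K`, where `K > 0` is the sum of the
integrals of the normalised recessive solutions, the left one weighted by `l_C`. The charge
condition then forces `c = q_Γ / K`, and this value does give a profile.
-/


open MeasureTheory Filter Set Asymptotics

/-! ### The recessive solution as a Gaussian moment integral -/

/-- The Gaussian moment integral `F κ p ξ = ∫₀^∞ s^p exp(-κ (s + ξ)² / 2) ds`. For `p = n ∈ ℕ` and
`κ = 2` it is a multiple of the iterated integral `iⁿ erfc`; in general it is the recessive solution
of `u'' / κ + ξ u' - p u = 0`. -/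
noncomputable def blF (κ p ξ : ℝ) : ℝ :=
  ∫ s in Ioi (0:ℝ), s ^ p * Real.exp (-(κ * (s + ξ) ^ 2) / 2)

/-- Comparison with a centred Gaussian of half the rate, uniform for `ξ` in bounded sets. -/
lemma blF_exp_le {κ : ℝ} (hκ : 0 < κ) {R ξ : ℝ} (h : |ξ| ≤ R) (s : ℝ) :
    Real.exp (-(κ * (s + ξ) ^ 2) / 2) ≤
      Real.exp (κ * R ^ 2 / 2) * Real.exp (-(κ / 4) * s ^ 2) := by
  rw [← Real.exp_add]
  apply Real.exp_le_exp.mpr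
  have h1 : ξ ^ 2 ≤ R ^ 2 := sq_le_sq' (by linarith [neg_abs_le ξ]) (by linarith [le_abs_self ξ])
  have h2 : s ^ 2 / 2 - R ^ 2 ≤ (s + ξ) ^ 2 := by nlinarith [sq_nonneg (s + 2 * ξ)]
  have h3 := mul_le_mul_of_nonneg_left h2 hκ.le
  linarith

lemma blF_meas (κ p ξ : ℝ) :
    Measurable (fun s : ℝ => s ^ p * Real.exp (-(κ * (s + ξ) ^ 2) / 2)) := by
  fun_prop

lemma blF_integrable {κ p : ℝ} (hκ : 0 < κ) (hp : -1 < p) (ξ : ℝ) :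
    IntegrableOn (fun s : ℝ => s ^ p * Real.exp (-(κ * (s + ξ) ^ 2) / 2)) (Ioi 0) := by
  refine Integrable.mono'
    ((integrableOn_rpow_mul_exp_neg_mul_sq (b := κ / 4) (by positivity) hp).const_mul
      (Real.exp (κ * |ξ| ^ 2 / 2))) (blF_meas κ p ξ).aestronglyMeasurable ?_
  refine (ae_restrict_iff' measurableSet_Ioi).2 (Eventually.of_forall fun s hs => ?_)
  have hs : 0 < s := hs
  rw [Real.norm_of_nonneg (by positivity)]
  have := mul_le_mul_of_nonneg_left (blF_exp_le hκ (le_refl |ξ|) s) (Real.rpow_nonneg hs.le p)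
  linarith

lemma setIntegral_Ioi_zero_pos {f : ℝ → ℝ} (hf : IntegrableOn f (Ioi 0))
    (hpos : ∀ s, 0 < s → 0 < f s) : 0 < ∫ s in Ioi (0:ℝ), f s := by
  rw [setIntegral_pos_iff_support_of_nonneg_ae
    ((ae_restrict_iff' measurableSet_Ioi).2 (Eventually.of_forall fun s hs => (hpos s hs).le)) hf]
  have hsub : Ioi (0:ℝ) ⊆ Function.support f := fun _ hs => (hpos _ hs).ne'
  rw [inter_eq_self_of_subset_right hsub]
  simp

lemma blF_pos {κ p : ℝ} (hκ : 0 < κ) (hp : -1 < p) (ξ : ℝ) : 0 < blF κ p ξ :=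
  setIntegral_Ioi_zero_pos (blF_integrable hκ hp ξ) fun _ hs =>
    mul_pos (Real.rpow_pos_of_pos hs p) (Real.exp_pos _)

lemma blF_split {s : ℝ} (hs : 0 < s) (p ξ : ℝ) (E : ℝ) :
    s ^ p * (E * (s + ξ)) = s ^ (p + 1) * E + ξ * (s ^ p * E) := by
  rw [Real.rpow_add_one hs.ne']; ring

lemma blF_hasDerivAt {κ p : ℝ} (hκ : 0 < κ) (hp : -1 < p) (ξ : ℝ) :
    HasDerivAt (blF κ p) (-κ * (blF κ (p + 1) ξ + ξ * blF κ p ξ)) ξ := by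
  set F' : ℝ → ℝ → ℝ := fun x s => s ^ p * (Real.exp (-(κ * (s + x) ^ 2) / 2) * (-κ * (s + x)))
    with hF'
  set R := |ξ| + 1 with hR
  have hR0 : 0 ≤ R := by positivity
  have key := hasDerivAt_integral_of_dominated_loc_of_deriv_le (μ := volume.restrict (Ioi (0:ℝ)))
    (F := fun x s : ℝ => s ^ p * Real.exp (-(κ * (s + x) ^ 2) / 2)) (F' := F') (x₀ := ξ)
    (s := Metric.ball ξ 1)
    (bound := fun s => κ * Real.exp (κ * R ^ 2 / 2) * (s ^ (p + 1) * Real.exp (-(κ / 4) * s ^ 2))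
      + κ * Real.exp (κ * R ^ 2 / 2) * R * (s ^ p * Real.exp (-(κ / 4) * s ^ 2)))
    (Metric.ball_mem_nhds ξ one_pos)
    (Eventually.of_forall fun x => (blF_meas κ p x).aestronglyMeasurable)
    (blF_integrable hκ hp ξ)
    (by
      have : Measurable (F' ξ) := by rw [hF']; fun_prop
      exact this.aestronglyMeasurable)
    (by
      refine (ae_restrict_iff' measurableSet_Ioi).2 (Eventually.of_forall fun s hs x hx => ?_)
      have hs : 0 < s := hs
      have hx : |x| ≤ R := by
        have : |x - ξ| < 1 := by simpa [Real.dist_eq] using hx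
        have h2 := abs_add_le (x - ξ) ξ
        rw [sub_add_cancel] at h2
        linarith
      have h1 := blF_exp_le hκ hx s
      have h2 : |s + x| ≤ s + R := (abs_add_le s x).trans (by rw [abs_of_pos hs]; linarith)
      have h3 : ‖F' x s‖ = κ * s ^ p * (Real.exp (-(κ * (s + x) ^ 2) / 2) * |s + x|) := by
        simp only [hF', norm_mul, Real.norm_eq_abs, abs_neg, abs_of_pos hκ, Real.abs_exp,
          abs_of_pos (Real.rpow_pos_of_pos hs p)]
        ring
      rw [h3]
      have h4 := mul_le_mul h1 h2 (abs_nonneg _) (by positivity)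
      have h5 := mul_le_mul_of_nonneg_left h4 (show 0 ≤ κ * s ^ p by positivity)
      refine h5.trans (le_of_eq ?_)
      rw [Real.rpow_add_one hs.ne']; ring)
    (((integrableOn_rpow_mul_exp_neg_mul_sq (b := κ / 4) (by positivity) (by linarith)).const_mul
        _).add
      ((integrableOn_rpow_mul_exp_neg_mul_sq (b := κ / 4) (by positivity) hp).const_mul _))
    (by
      refine Eventually.of_forall fun s x _ => ?_
      have h1 : HasDerivAt (fun x : ℝ => -(κ * (s + x) ^ 2) / 2) (-κ * (s + x)) x := by
        have := ((((hasDerivAt_id x).const_add s).pow 2).const_mul κ).neg.div_const 2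
        refine this.congr_deriv ?_
        simp; ring
      exact h1.exp.const_mul _)
  refine key.2.congr_deriv ?_
  rw [blF, blF, ← integral_const_mul ξ, ← integral_add (blF_integrable hκ (by linarith) ξ)
    ((blF_integrable hκ hp ξ).const_mul ξ), ← integral_const_mul]
  refine setIntegral_congr_fun measurableSet_Ioi fun s hs => ?_
  simp only [hF']
  rw [← blF_split hs]; ring

/-- Integration by parts in `s` for `s ^ (p + 1) * exp(-κ (s + ξ)² / 2)`. -/
lemma blF_parts {κ p : ℝ} (hκ : 0 < κ) (hp : -1 < p) (ξ : ℝ) :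
    (p + 1) * blF κ p ξ = κ * (blF κ (p + 2) ξ + ξ * blF κ (p + 1) ξ) := by
  have i0 := blF_integrable hκ hp ξ
  have i1 := blF_integrable hκ (show -1 < p + 1 by linarith) ξ
  have i2 := blF_integrable hκ (show -1 < p + 2 by linarith) ξ
  set f : ℝ → ℝ := fun s => s ^ (p + 1) * Real.exp (-(κ * (s + ξ) ^ 2) / 2) with hf
  set f' : ℝ → ℝ := fun s => (p + 1) * (s ^ p * Real.exp (-(κ * (s + ξ) ^ 2) / 2)) -
    κ * (s ^ (p + 2) * Real.exp (-(κ * (s + ξ) ^ 2) / 2) +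
      ξ * (s ^ (p + 1) * Real.exp (-(κ * (s + ξ) ^ 2) / 2))) with hf'
  have hd : ∀ s ∈ Ioi (0:ℝ), HasDerivAt f (f' s) s := by
    intro s hs
    have hs : 0 < s := hs
    have h1 : HasDerivAt (fun s : ℝ => -(κ * (s + ξ) ^ 2) / 2) (-κ * (s + ξ)) s := by
      have := ((((hasDerivAt_id s).add_const ξ).pow 2).const_mul κ).neg.div_const 2
      refine this.congr_deriv ?_
      simp; ring
    have h2 := (Real.hasDerivAt_rpow_const (x := s) (p := p + 1) (Or.inl hs.ne')).mul h1.exp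
    refine h2.congr_deriv ?_
    simp only [hf', add_sub_cancel_right]
    rw [show p + 2 = p + 1 + 1 by ring, Real.rpow_add_one hs.ne' (p + 1)]; ring
  have hi : IntegrableOn f' (Ioi 0) := (i0.const_mul _).sub ((i2.add (i1.const_mul _)).const_mul _)
  have hc : ContinuousWithinAt f (Ici 0) 0 := by
    have : Continuous f := by
      have := Real.continuous_rpow_const (q := p + 1) (by linarith)
      rw [hf]; fun_prop
    exact this.continuousWithinAt
  have hz := integral_Ioi_of_hasDerivAt_of_tendsto hc hd hi
    (tendsto_zero_of_hasDerivAt_of_integrableOn_Ioi hd hi i1)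
  have hf0 : f 0 = 0 := by
    simp only [hf]; rw [Real.zero_rpow (by linarith), zero_mul]
  have e1 : ∫ s in Ioi (0:ℝ), f' s = (∫ s in Ioi (0:ℝ), (p + 1) *
      (s ^ p * Real.exp (-(κ * (s + ξ) ^ 2) / 2))) -
      ∫ s in Ioi (0:ℝ), κ * (s ^ (p + 2) * Real.exp (-(κ * (s + ξ) ^ 2) / 2) + ξ * f s) :=
    integral_sub (i0.const_mul _) ((i2.add (i1.const_mul _)).const_mul _)
  have e2 : ∫ s in Ioi (0:ℝ), (s ^ (p + 2) * Real.exp (-(κ * (s + ξ) ^ 2) / 2) + ξ * f s) =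
      blF κ (p + 2) ξ + ∫ s in Ioi (0:ℝ), ξ * f s := integral_add i2 (i1.const_mul _)
  have e3 : ∫ s in Ioi (0:ℝ), ξ * f s = ξ * blF κ (p + 1) ξ := integral_const_mul _ _
  rw [e1, integral_const_mul, integral_const_mul, e2, e3, hf0] at hz
  change (p + 1) * blF κ p ξ - _ = _ at hz
  linarith

lemma blF_deriv {κ p : ℝ} (hκ : 0 < κ) (hp : -1 < p) :
    deriv (blF κ p) = fun ξ => -κ * (blF κ (p + 1) ξ + ξ * blF κ p ξ) :=
  funext fun ξ => (blF_hasDerivAt hκ hp ξ).deriv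

lemma blF_contDiff {κ : ℝ} (hκ : 0 < κ) (n : ℕ) :
    ∀ p : ℝ, -1 < p → ContDiff ℝ n (blF κ p) := by
  induction n with
  | zero =>
    intro p hp
    exact contDiff_zero.2 (continuous_iff_continuousAt.2 fun ξ =>
      (blF_hasDerivAt hκ hp ξ).continuousAt)
  | succ n ih =>
    intro p hp
    have : ((n + 1 : ℕ) : WithTop ℕ∞) = (n : WithTop ℕ∞) + 1 := by push_cast; rfl
    rw [this, contDiff_succ_iff_deriv]
    refine ⟨fun ξ => (blF_hasDerivAt hκ hp ξ).differentiableAt, by simp, ?_⟩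
    rw [blF_deriv hκ hp]
    exact contDiff_const.mul ((ih _ (by linarith)).add (contDiff_id.mul (ih _ hp)))

lemma blF_ode {κ p : ℝ} (hκ : 0 < κ) (hp : -1 < p) (ξ : ℝ) :
    deriv (deriv (blF κ p)) ξ + κ * ξ * deriv (blF κ p) ξ - κ * p * blF κ p ξ = 0 := by
  rw [blF_deriv hκ hp]
  have h := ((blF_hasDerivAt hκ (show -1 < p + 1 by linarith) ξ).add
    ((hasDerivAt_id ξ).mul (blF_hasDerivAt hκ hp ξ))).const_mul (-κ)
  have h' : deriv (fun ξ => -κ * (blF κ (p + 1) ξ + ξ * blF κ p ξ)) ξ = _ := h.deriv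
  rw [h']
  have hparts := blF_parts hκ hp ξ
  simp only [id, show p + 1 + 1 = p + 2 by ring]
  linear_combination (-κ) * hparts

lemma blF_le {κ p : ℝ} (hκ : 0 < κ) (hp : -1 < p) {ξ : ℝ} (hξ : 0 ≤ ξ) :
    blF κ p ξ ≤ blF κ p 0 * Real.exp (-(κ / 2) * ξ ^ 2) := by
  rw [blF, blF, ← integral_mul_const]
  refine setIntegral_mono_on (blF_integrable hκ hp ξ) ((blF_integrable hκ hp 0).mul_const _)
    measurableSet_Ioi fun s hs => ?_
  have hs : 0 < s := hs
  rw [mul_assoc, ← Real.exp_add]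
  refine mul_le_mul_of_nonneg_left (Real.exp_le_exp.2 ?_) (Real.rpow_nonneg hs.le p)
  have := mul_nonneg hκ.le (mul_nonneg hs.le hξ)
  nlinarith

lemma blF_tendsto {κ p : ℝ} (hκ : 0 < κ) (hp : -1 < p) : Tendsto (blF κ p) atTop (nhds 0) := by
  have h1 : Tendsto (fun ξ : ℝ => blF κ p 0 * Real.exp (-(κ / 2) * ξ ^ 2)) atTop (nhds 0) := by
    have h2 : Tendsto (fun ξ : ℝ => -(κ / 2) * ξ ^ 2) atTop atBot :=
      (tendsto_pow_atTop two_ne_zero).const_mul_atTop_of_neg (by linarith)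
    simpa using (Real.tendsto_exp_atBot.comp h2).const_mul (blF κ p 0)
  refine tendsto_of_tendsto_of_tendsto_of_le_of_le' tendsto_const_nhds h1
    (Eventually.of_forall fun ξ => (blF_pos hκ hp ξ).le) ?_
  filter_upwards [eventually_ge_atTop 0] with ξ hξ using blF_le hκ hp hξ

lemma blF_integrableOn {κ p : ℝ} (hκ : 0 < κ) (hp : -1 < p) :
    IntegrableOn (blF κ p) (Ioi 0) := by
  refine Integrable.mono' ((integrable_exp_neg_mul_sq
    (show 0 < κ / 2 by linarith)).integrableOn.const_mul (blF κ p 0))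
    ((blF_contDiff hκ 0 p hp).continuous.aestronglyMeasurable) ?_
  refine (ae_restrict_iff' measurableSet_Ioi).2 (Eventually.of_forall fun s hs => ?_)
  rw [Real.norm_of_nonneg (blF_pos hκ hp s).le]
  exact blF_le hκ hp (le_of_lt hs)

/-- Watson-type estimate: after factoring out `exp(-κ ξ² / 2)`, replacing `exp(-κ s² / 2)` by `1`
leaves a Gamma integral, and `0 ≤ 1 - exp(-κ s² / 2) ≤ κ s² / 2` controls the error. -/
lemma blF_asymp {κ p : ℝ} (hκ : 0 < κ) (hp : -1 < p) {ξ : ℝ} (hξ : 0 < ξ) :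
    |blF κ p ξ - (1 / κ) ^ (p + 1) * Real.Gamma (p + 1) * ξ ^ (-p - 1) *
        Real.exp (-(κ / 2) * ξ ^ 2)| ≤
      κ / 2 * ((1 / κ) ^ (p + 3) * Real.Gamma (p + 3)) *
        (ξ ^ (-p - 1) * Real.exp (-(κ / 2) * ξ ^ 2) * (ξ⁻¹) ^ 2) := by
  have hr : 0 < κ * ξ := mul_pos hκ hξ
  have hI : ∀ t : ℝ, -1 < t →
      IntegrableOn (fun s : ℝ => s ^ t * Real.exp (-(κ * ξ * s))) (Ioi 0) := by
    intro t ht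
    simpa [neg_mul] using integrableOn_rpow_mul_exp_neg_mul_rpow ht one_pos hr
  have hG : ∀ t : ℝ, -1 < t → ∫ s in Ioi (0:ℝ), s ^ t * Real.exp (-(κ * ξ * s)) =
      (1 / κ) ^ (t + 1) * Real.Gamma (t + 1) * ξ ^ (-t - 1) := by
    intro t ht
    have := Real.integral_rpow_mul_exp_neg_mul_Ioi (show 0 < t + 1 by linarith) hr
    rw [add_sub_cancel_right] at this
    rw [this, ← div_div, Real.div_rpow (by positivity) hξ.le,
      show -t - 1 = -(t + 1) by ring, Real.rpow_neg hξ.le]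
    ring
  have hE : blF κ p ξ = (∫ s in Ioi (0:ℝ), s ^ p * Real.exp (-(κ * ξ * s)) *
      Real.exp (-(κ / 2) * s ^ 2)) * Real.exp (-(κ / 2) * ξ ^ 2) := by
    rw [blF, ← integral_mul_const]
    refine setIntegral_congr_fun measurableSet_Ioi fun s _ => ?_
    simp only [mul_assoc, ← Real.exp_add]
    congr 2; ring
  have hJ : IntegrableOn (fun s : ℝ => s ^ p * Real.exp (-(κ * ξ * s)) *
      Real.exp (-(κ / 2) * s ^ 2)) (Ioi 0) := by
    refine Integrable.mono' (hI p hp) (by fun_prop) ?_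
    refine (ae_restrict_iff' measurableSet_Ioi).2 (Eventually.of_forall fun s hs => ?_)
    have hs : 0 < s := hs
    rw [Real.norm_of_nonneg (by positivity)]
    refine mul_le_of_le_one_right (by positivity) (Real.exp_le_one_iff.2 ?_)
    have := mul_pos hκ (pow_pos hs 2)
    linarith
  have hK : |(∫ s in Ioi (0:ℝ), s ^ p * Real.exp (-(κ * ξ * s)) * Real.exp (-(κ / 2) * s ^ 2)) -
      (1 / κ) ^ (p + 1) * Real.Gamma (p + 1) * ξ ^ (-p - 1)| ≤
      κ / 2 * ((1 / κ) ^ (p + 3) * Real.Gamma (p + 3)) * (ξ ^ (-p - 1) * (ξ⁻¹) ^ 2) := by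
    have e2 : κ / 2 * ((1 / κ) ^ (p + 3) * Real.Gamma (p + 3)) * (ξ ^ (-p - 1) * (ξ⁻¹) ^ 2) =
        ∫ s in Ioi (0:ℝ), κ / 2 * (s ^ (p + 2) * Real.exp (-(κ * ξ * s))) := by
      rw [integral_const_mul, hG (p + 2) (by linarith), show p + 2 + 1 = p + 3 by ring,
        show -(p + 2) - 1 = (-p - 1) - 2 by ring, Real.rpow_sub hξ (-p - 1) 2, Real.rpow_two]
      field_simp
    rw [e2, ← hG p hp, ← integral_sub hJ (hI p hp), ← Real.norm_eq_abs]
    refine norm_integral_le_of_norm_le ((hI (p + 2) (by linarith)).const_mul (κ / 2)) ?_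
    refine (ae_restrict_iff' measurableSet_Ioi).2 (Eventually.of_forall fun s hs => ?_)
    have hs : 0 < s := hs
    have h1 : Real.exp (-(κ / 2) * s ^ 2) ≤ 1 := by
      refine Real.exp_le_one_iff.2 ?_
      have := mul_pos hκ (pow_pos hs 2)
      linarith
    have h2 := Real.add_one_le_exp (-(κ / 2) * s ^ 2)
    have h3 : 0 ≤ s ^ p * Real.exp (-(κ * ξ * s)) := by positivity
    rw [Real.norm_eq_abs, abs_sub_comm, abs_of_nonneg (by nlinarith), Real.rpow_add hs,
      Real.rpow_two]
    have h4 := mul_le_mul_of_nonneg_left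
      (show 1 - Real.exp (-(κ / 2) * s ^ 2) ≤ κ / 2 * s ^ 2 by linarith) h3
    linarith
  have hX := Real.exp_pos (-(κ / 2) * ξ ^ 2)
  rw [hE, ← sub_mul, abs_mul, abs_of_pos hX]
  refine (mul_le_mul_of_nonneg_right hK hX.le).trans (le_of_eq (by ring))

/-! ### The half-line problem -/

/-- Half of the maximum principle: at a positive interior maximum the zeroth-order term forces
`w'' > 0`, making the point a local minimum as well, hence `w` locally constant and `w'' = 0`. -/
lemma halfLine_nonpos {D L τ : ℝ} (hD : 0 < D) (hτ : 0 < τ) {w : ℝ → ℝ}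
    (hw : ContinuousOn w (Ioi 0))
    (hode : ∀ ξ > 0, D * deriv (deriv w) ξ - L * ξ * deriv w ξ - w ξ / τ = 0)
    (h0 : Tendsto w (nhdsWithin 0 (Ioi 0)) (nhds 0)) (h1 : Tendsto w atTop (nhds 0)) :
    ∀ ξ > 0, w ξ ≤ 0 := by
  intro x hx
  by_contra! hpos
  obtain ⟨δ, hδ, hδw⟩ := (mem_nhdsGT_iff_exists_Ioo_subset (a := (0:ℝ))).1
    (h0.eventually_lt_const hpos)
  obtain ⟨R, hR⟩ := eventually_atTop.1 (h1.eventually_lt_const hpos)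
  have hδ : 0 < δ := hδ
  have hxδ : δ ≤ x := by
    by_contra! h
    exact lt_irrefl (w x) (hδw ⟨hx, h⟩)
  have hxR : x ≤ R := by
    by_contra! h
    exact lt_irrefl _ (hR x h.le)
  have hpos' : ∀ y ∈ Icc δ R, y ∈ Ioi (0:ℝ) := fun y hy => hδ.trans_le hy.1
  obtain ⟨m, hm, hmax⟩ := isCompact_Icc.exists_isMaxOn ⟨x, hxδ, hxR⟩ (hw.mono hpos')
  have hxm : w x ≤ w m := hmax ⟨hxδ, hxR⟩
  have hm0 : 0 < m := hpos' m hm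
  have hglob : ∀ y > 0, w y ≤ w m := by
    intro y hy
    rcases lt_or_ge y δ with h | h
    · exact (show w y < w x from hδw ⟨hy, h⟩).le.trans hxm
    rcases le_or_gt y R with h' | h'
    · exact hmax ⟨h, h'⟩
    · exact (hR y h'.le).le.trans hxm
  have hloc : IsLocalMax w m := by
    filter_upwards [Ioi_mem_nhds hm0] with y hy using hglob y hy
  have hd := hloc.deriv_eq_zero
  have hdd : 0 < deriv (deriv w) m := by
    have h := hode m hm0
    rw [hd] at h
    have h2 : 0 < w m / τ := div_pos (hpos.trans_le hxm) hτ
    have h3 : 0 < D * deriv (deriv w) m := by linarith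
    exact pos_of_mul_pos_right h3 hD.le
  have hmin := isLocalMin_of_deriv_deriv_pos hdd hd (hw.continuousAt (Ioi_mem_nhds hm0))
  have hconst : w =ᶠ[nhds m] fun _ => w m := by
    filter_upwards [hloc, hmin] with y h1 h2 using le_antisymm h1 h2
  have := hconst.deriv.deriv_eq
  simp at this
  exact hdd.ne' this

lemma contDiffOn_two_deriv {w : ℝ → ℝ} (hw : ContDiffOn ℝ 2 w (Ioi 0)) {ξ : ℝ} (hξ : 0 < ξ) :
    DifferentiableAt ℝ w ξ ∧ DifferentiableAt ℝ (deriv w) ξ := by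
  have h2 : ContDiffOn ℝ (1 + 1) w (Ioi 0) := by rwa [one_add_one_eq_two]
  have h := (contDiffOn_succ_iff_deriv_of_isOpen isOpen_Ioi).1 h2
  exact ⟨h.1.differentiableAt (Ioi_mem_nhds hξ),
    (h.2.2.differentiableOn one_ne_zero).differentiableAt (Ioi_mem_nhds hξ)⟩

/-- Linear combinations of solutions are solutions. -/
lemma ode_linear {D L τ a b : ℝ} {w v : ℝ → ℝ}
    (hw : ContDiffOn ℝ 2 w (Ioi 0)) (hv : ContDiffOn ℝ 2 v (Ioi 0))
    (hwo : ∀ ξ > 0, D * deriv (deriv w) ξ - L * ξ * deriv w ξ - w ξ / τ = 0)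
    (hvo : ∀ ξ > 0, D * deriv (deriv v) ξ - L * ξ * deriv v ξ - v ξ / τ = 0) :
    ∀ ξ > 0, D * deriv (deriv fun x => a * w x + b * v x) ξ -
      L * ξ * deriv (fun x => a * w x + b * v x) ξ - (a * w ξ + b * v ξ) / τ = 0 := by
  intro ξ hξ
  have d1 : ∀ x > 0, deriv (fun x => a * w x + b * v x) x = a * deriv w x + b * deriv v x :=
    fun x hx => (((contDiffOn_two_deriv hw hx).1.hasDerivAt.const_mul a).add
      ((contDiffOn_two_deriv hv hx).1.hasDerivAt.const_mul b)).deriv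
  have e : deriv (fun x => a * w x + b * v x) =ᶠ[nhds ξ]
      fun x => a * deriv w x + b * deriv v x := by
    filter_upwards [Ioi_mem_nhds hξ] with x hx using d1 x hx
  have d2 : deriv (fun x => a * deriv w x + b * deriv v x) ξ =
      a * deriv (deriv w) ξ + b * deriv (deriv v) ξ :=
    (((contDiffOn_two_deriv hw hξ).2.hasDerivAt.const_mul a).add
      ((contDiffOn_two_deriv hv hξ).2.hasDerivAt.const_mul b)).deriv
  rw [e.deriv_eq, d1 ξ hξ, d2]
  linear_combination a * hwo ξ hξ + b * hvo ξ hξ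

/-- On a half-line, a decaying solution is determined by its boundary value. -/
lemma halfLine_unique {D L τ c : ℝ} (hD : 0 < D) (hτ : 0 < τ) {w v : ℝ → ℝ}
    (hw : ContDiffOn ℝ 2 w (Ioi 0)) (hv : ContDiff ℝ 2 v)
    (hwo : ∀ ξ > 0, D * deriv (deriv w) ξ - L * ξ * deriv w ξ - w ξ / τ = 0)
    (hvo : ∀ ξ > 0, D * deriv (deriv v) ξ - L * ξ * deriv v ξ - v ξ / τ = 0)
    (hv0 : v 0 = 1) (hw0 : Tendsto w (nhdsWithin 0 (Ioi 0)) (nhds c))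
    (hw1 : Tendsto w atTop (nhds 0)) (hv1 : Tendsto v atTop (nhds 0)) :
    ∀ ξ > 0, w ξ = c * v ξ := by
  have hv0' : Tendsto v (nhdsWithin 0 (Ioi 0)) (nhds 1) :=
    hv0 ▸ (hv.continuous.tendsto 0).mono_left nhdsWithin_le_nhds
  have key : ∀ a b : ℝ, a * c + b = 0 → ∀ ξ > 0, a * w ξ + b * v ξ ≤ 0 := fun a b hab =>
    halfLine_nonpos hD hτ
      ((continuousOn_const.mul hw.continuousOn).add (continuousOn_const.mul
        hv.continuous.continuousOn))
      (ode_linear hw hv.contDiffOn hwo hvo)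
      (by simpa [hab] using (hw0.const_mul a).add (hv0'.const_mul b))
      (by simpa using (hw1.const_mul a).add (hv1.const_mul b))
  intro ξ hξ
  have h1 := key 1 (-c) (by ring) ξ hξ
  have h2 := key (-1) c (by ring) ξ hξ
  linarith

/-- The normalised recessive solution on `(0, ∞)` for `λ < 0`, with its decay rate. -/
lemma halfLine_exists {D τ lam : ℝ} (hD : 0 < D) (hτ : 0 < τ) (hlam : lam < 0) :
    ∃ v : ℝ → ℝ, ContDiff ℝ 2 v ∧ v 0 = 1 ∧
      (∀ ξ, D * deriv (deriv v) ξ - lam * ξ * deriv v ξ - v ξ / τ = 0) ∧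
      (∀ ξ, 0 < v ξ) ∧ Tendsto v atTop (nhds 0) ∧ IntegrableOn v (Ioi 0) ∧
      ∃ C : ℝ, 0 < C ∧
        (fun ξ : ℝ => v ξ - C * ξ ^ (-(|lam| * τ)⁻¹ - 1) *
            Real.exp (-(|lam| * ξ ^ 2) / (2 * D))) =O[atTop]
          (fun ξ : ℝ => ξ ^ (-(|lam| * τ)⁻¹ - 1) *
            Real.exp (-(|lam| * ξ ^ 2) / (2 * D)) * (ξ⁻¹) ^ 2) := by
  rw [abs_of_neg hlam]
  set κ := -lam / D with hκd
  set p := (-lam * τ)⁻¹ with hpd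
  have hl : 0 < -lam := by linarith
  have hκ : 0 < κ := div_pos hl hD
  have hp0 : 0 < p := inv_pos.2 (mul_pos hl hτ)
  have hp : -1 < p := by linarith
  have hF0 := blF_pos hκ hp 0
  set A := (blF κ p 0)⁻¹ with hA
  have hA0 : 0 < A := inv_pos.2 hF0
  have hE : ∀ ξ : ℝ, -(-lam * ξ ^ 2) / (2 * D) = -(κ / 2) * ξ ^ 2 := by
    intro ξ; rw [hκd]; field_simp
  refine ⟨fun ξ => A * blF κ p ξ, contDiff_const.mul (blF_contDiff hκ 2 p hp),
    inv_mul_cancel₀ hF0.ne', ?_, fun ξ => mul_pos hA0 (blF_pos hκ hp ξ),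
    by simpa using (blF_tendsto hκ hp).const_mul A, (blF_integrableOn hκ hp).const_mul A,
    A * ((1 / κ) ^ (p + 1) * Real.Gamma (p + 1)),
    mul_pos hA0 (mul_pos (by positivity) (Real.Gamma_pos_of_pos (by linarith))), ?_⟩
  · intro ξ
    have e : deriv (fun ξ => A * blF κ p ξ) = fun ξ => A * deriv (blF κ p) ξ :=
      funext fun x => deriv_const_mul A (blF_hasDerivAt hκ hp x).differentiableAt
    have hd : DifferentiableAt ℝ (deriv (blF κ p)) ξ :=
      by
      rw [blF_deriv hκ hp]
      exact (((blF_hasDerivAt hκ (by linarith) ξ).add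
        ((hasDerivAt_id ξ).mul (blF_hasDerivAt hκ hp ξ))).const_mul (-κ)).differentiableAt
    rw [e, deriv_const_mul A hd]
    have h := blF_ode hκ hp ξ
    have h1 : D * κ = -lam := by rw [hκd]; field_simp
    have h2 : -lam * p = 1 / τ := by rw [hpd, mul_inv, mul_inv_cancel_left₀ hl.ne', one_div]
    have h3 : A * blF κ p ξ / τ = A * blF κ p ξ * (1 / τ) := by ring
    rw [h3, ← h2]
    linear_combination A * D * h + (-A * ξ * deriv (blF κ p) ξ + A * p * blF κ p ξ) * h1
  · refine IsBigO.of_bound (A * (κ / 2 * ((1 / κ) ^ (p + 3) * Real.Gamma (p + 3)))) ?_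
    filter_upwards [eventually_gt_atTop 0] with ξ hξ
    rw [hE]
    have h := mul_le_mul_of_nonneg_left (blF_asymp hκ hp hξ) hA0.le
    have hn : 0 ≤ ξ ^ (-p - 1) * Real.exp (-(κ / 2) * ξ ^ 2) * (ξ⁻¹) ^ 2 := by positivity
    rw [Real.norm_of_nonneg hn, Real.norm_eq_abs]
    rw [← abs_of_pos hA0, ← abs_mul, abs_of_pos hA0] at h
    rw [show A * blF κ p ξ - A * ((1 / κ) ^ (p + 1) * Real.Gamma (p + 1)) * ξ ^ (-p - 1) *
        Real.exp (-(κ / 2) * ξ ^ 2) = A * (blF κ p ξ - (1 / κ) ^ (p + 1) * Real.Gamma (p + 1) *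
        ξ ^ (-p - 1) * Real.exp (-(κ / 2) * ξ ^ 2)) by ring]
    linarith

/-! ### Gluing the two half-lines -/

lemma ode_congr {D lam τ ξ : ℝ} {w v : ℝ → ℝ} (h : w =ᶠ[nhds ξ] v)
    (hv : D * deriv (deriv v) ξ - lam * ξ * deriv v ξ - v ξ / τ = 0) :
    D * deriv (deriv w) ξ - lam * ξ * deriv w ξ - w ξ / τ = 0 := by
  rw [h.deriv.deriv_eq, h.deriv_eq, h.eq_of_nhds, hv]

lemma ode_const_mul {D lam τ ξ : ℝ} (c : ℝ) {v : ℝ → ℝ}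
    (hv : D * deriv (deriv v) ξ - lam * ξ * deriv v ξ - v ξ / τ = 0) :
    D * deriv (deriv fun x => c * v x) ξ - lam * ξ * deriv (fun x => c * v x) ξ -
      c * v ξ / τ = 0 := by
  have e : deriv (fun x => c * v x) = fun x => c * deriv v x :=
    funext fun x => deriv_const_mul_field c
  rw [e, deriv_const_mul_field]
  linear_combination c * hv

/-- The equation is invariant under `ξ ↦ -ξ`. -/
lemma ode_neg {D lam τ ξ : ℝ} {v : ℝ → ℝ}
    (hv : D * deriv (deriv v) (-ξ) - lam * (-ξ) * deriv v (-ξ) - v (-ξ) / τ = 0) :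
    D * deriv (deriv fun x => v (-x)) ξ - lam * ξ * deriv (fun x => v (-x)) ξ -
      v (-ξ) / τ = 0 := by
  have e : deriv (fun x => v (-x)) = fun x => -deriv v (-x) := funext fun x => deriv_comp_neg v x
  have e2 : deriv (fun x => -deriv v (-x)) ξ = deriv (deriv v) (-ξ) := by
    rw [deriv.fun_neg, deriv_comp_neg (deriv v), neg_neg]
  rw [e, e2]
  linear_combination hv

lemma integral_two_sided {q ve vi : ℝ → ℝ} {a b : ℝ} (hq : Integrable q)
    (hpos : ∀ ξ > 0, q ξ = a * ve ξ) (hneg : ∀ ξ < 0, q ξ = b * vi (-ξ)) :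
    ∫ ξ, q ξ = a * (∫ ξ in Ioi (0:ℝ), ve ξ) + b * ∫ ξ in Ioi (0:ℝ), vi ξ := by
  rw [← intervalIntegral.integral_Iic_add_Ioi (b := (0:ℝ)) hq.integrableOn hq.integrableOn,
    setIntegral_congr_fun measurableSet_Ioi hpos, integral_Iic_eq_integral_Iio,
    setIntegral_congr_fun measurableSet_Iio hneg, ← integral_Iic_eq_integral_Iio,
    integral_const_mul, integral_const_mul]
  have := integral_comp_neg_Iic (0:ℝ) vi
  rw [neg_zero] at this
  rw [this, add_comm]

/-- A profile is pinned down by its right limit `qp`: on each side it is the multiple of the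
normalised recessive solution prescribed by the boundary values `qp` and `lC * qp`. -/
lemma profile_eq {Dqi Dqe τi τe lC lam qΓ : ℝ} (hDqi : 0 < Dqi) (hDqe : 0 < Dqe) (hτi : 0 < τi)
    (hτe : 0 < τe) {vi ve : ℝ → ℝ} (hi : ContDiff ℝ 2 vi) (he : ContDiff ℝ 2 ve)
    (hi0 : vi 0 = 1) (he0 : ve 0 = 1)
    (hio : ∀ ξ, Dqi * deriv (deriv vi) ξ - lam * ξ * deriv vi ξ - vi ξ / τi = 0)
    (heo : ∀ ξ, Dqe * deriv (deriv ve) ξ - lam * ξ * deriv ve ξ - ve ξ / τe = 0)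
    (hi1 : Tendsto vi atTop (nhds 0)) (he1 : Tendsto ve atTop (nhds 0))
    {q : ℝ → ℝ} (hq : IsBLProfile Dqi Dqe τi τe lC lam qΓ q) :
    ∃ c : ℝ, (∀ ξ > 0, q ξ = c * ve ξ) ∧ (∀ ξ < 0, q ξ = lC * c * vi (-ξ)) ∧
      c * (∫ ξ in Ioi (0:ℝ), ve ξ) + lC * c * (∫ ξ in Ioi (0:ℝ), vi ξ) = qΓ := by
  obtain ⟨qm, qp, cm, cp, tm, tp, om, op, hpart, ttop, tbot, hint, hval⟩ := hq
  have hpos := halfLine_unique hDqe hτe cp he op (fun ξ _ => heo ξ) he0 tp ttop he1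
  have hneg' : ∀ ξ > 0, q (-ξ) = qm * vi ξ := by
    refine halfLine_unique (w := fun x => q (-x)) hDqi hτi ?_ hi
      (fun ξ hξ => ode_neg (om (-ξ) (neg_lt_zero.2 hξ))) (fun ξ _ => hio ξ) hi0 ?_
      (tbot.comp tendsto_neg_atTop_atBot) hi1
    · exact cm.comp contDiff_neg.contDiffOn fun x (hx : 0 < x) => neg_lt_zero.2 hx
    · refine tm.comp (tendsto_nhdsWithin_iff.2 ⟨?_, ?_⟩)
      · exact (continuous_neg.tendsto' (0:ℝ) 0 neg_zero).mono_left nhdsWithin_le_nhds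
      · filter_upwards [self_mem_nhdsWithin] with x hx using neg_lt_zero.2 (mem_Ioi.1 hx)
  have hneg : ∀ ξ < 0, q ξ = lC * qp * vi (-ξ) := fun ξ hξ => by
    rw [hpart, ← hneg' (-ξ) (neg_pos.2 hξ), neg_neg]
  exact ⟨qp, hpos, hneg, (integral_two_sided hint hpos hneg).symm.trans hval⟩

/-- Conversely, gluing the two recessive solutions with the right constant gives a profile. -/
lemma profile_glue {Dqi Dqe τi τe lC lam qΓ c : ℝ}
    {vi ve : ℝ → ℝ} (hi : ContDiff ℝ 2 vi) (he : ContDiff ℝ 2 ve)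
    (hi0 : vi 0 = 1) (he0 : ve 0 = 1)
    (hio : ∀ ξ, Dqi * deriv (deriv vi) ξ - lam * ξ * deriv vi ξ - vi ξ / τi = 0)
    (heo : ∀ ξ, Dqe * deriv (deriv ve) ξ - lam * ξ * deriv ve ξ - ve ξ / τe = 0)
    (hi1 : Tendsto vi atTop (nhds 0)) (he1 : Tendsto ve atTop (nhds 0))
    (hiI : IntegrableOn vi (Ioi 0)) (heI : IntegrableOn ve (Ioi 0)) {q : ℝ → ℝ}
    (hpos : ∀ ξ > 0, q ξ = c * ve ξ) (hneg : ∀ ξ < 0, q ξ = lC * c * vi (-ξ))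
    (hc : c * (∫ ξ in Ioi (0:ℝ), ve ξ) + lC * c * (∫ ξ in Ioi (0:ℝ), vi ξ) = qΓ) :
    IsBLProfile Dqi Dqe τi τe lC lam qΓ q := by
  have cneg : ContDiff ℝ 2 (fun x => lC * c * vi (-x)) := contDiff_const.mul (hi.comp contDiff_neg)
  have cpos : ContDiff ℝ 2 (fun x => c * ve x) := contDiff_const.mul he
  have hint : Integrable q := by
    have h1 : IntegrableOn q (Ioi 0) :=
      IntegrableOn.congr_fun (heI.const_mul c) (fun x hx => (hpos x hx).symm) measurableSet_Ioi
    have h2 : IntegrableOn q (Iio 0) := by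
      have h3 : IntegrableOn (fun x => vi (-x)) (Iio 0) :=
        IntegrableOn.comp_neg_Iio (by rwa [neg_zero])
      exact IntegrableOn.congr_fun (h3.const_mul (lC * c)) (fun x hx => (hneg x hx).symm)
        measurableSet_Iio
    rw [← integrableOn_univ, ← Iic_union_Ioi (a := (0:ℝ))]
    exact ((integrableOn_Iic_iff_integrableOn_Iio (by simp)).2 h2).union h1
  refine ⟨lC * c, c, cneg.contDiffOn.congr hneg, cpos.contDiffOn.congr hpos, ?_, ?_, ?_, ?_, rfl,
    ?_, ?_, hint, (integral_two_sided hint hpos hneg).trans hc⟩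
  · have h : Tendsto (fun x => lC * c * vi (-x)) (nhdsWithin 0 (Iio 0)) (nhds (lC * c)) :=
      (cneg.continuous.tendsto' 0 _ (by simp [hi0])).mono_left nhdsWithin_le_nhds
    refine h.congr' ?_
    filter_upwards [self_mem_nhdsWithin] with x hx using (hneg x hx).symm
  · have h : Tendsto (fun x => c * ve x) (nhdsWithin 0 (Ioi 0)) (nhds c) :=
      (cpos.continuous.tendsto' 0 _ (by simp [he0])).mono_left nhdsWithin_le_nhds
    refine h.congr' ?_
    filter_upwards [self_mem_nhdsWithin] with x hx using (hpos x hx).symm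
  · intro ξ hξ
    refine ode_congr (v := fun x => lC * c * vi (-x)) ?_
      (ode_const_mul (v := fun x => vi (-x)) (lC * c) (ode_neg (hio (-ξ))))
    filter_upwards [Iio_mem_nhds hξ] with x hx using hneg x hx
  · intro ξ hξ
    refine ode_congr (v := fun x => c * ve x) ?_ (ode_const_mul c (heo ξ))
    filter_upwards [Ioi_mem_nhds hξ] with x hx using hpos x hx
  · have h : Tendsto (fun x => c * ve x) atTop (nhds 0) := by simpa using he1.const_mul c
    refine h.congr' ?_
    filter_upwards [eventually_gt_atTop 0] with x hx using (hpos x hx).symm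
  · have h : Tendsto (fun x => lC * c * vi (-x)) atBot (nhds 0) := by
      simpa using (hi1.comp tendsto_neg_atBot_atTop).const_mul (lC * c)
    refine h.congr' ?_
    filter_upwards [eventually_lt_atBot 0] with x hx using (hneg x hx).symm

/-- When `λ < 0` and `q_Γ ≠ 0`, there is exactly one boundary-layer charge
profile; it has the constant sign of `q_Γ` away from the interface and decays
supra-exponentially:
`q̃₁(ξ) = q_Γ C⁻ |ξ|^(−1/(|λ|τ)−1) exp(−|λ|ξ²/(2D)) (1 + O(ξ⁻²))` as `ξ → ±∞`. -/
theorem lambda_neg_unique_profile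
    (Dqi Dqe τi τe lC lam qΓ : ℝ)
    (hDqi : 0 < Dqi) (hDqe : 0 < Dqe) (hτi : 0 < τi) (hτe : 0 < τe)
    (hlC : 0 < lC) (hlam : lam < 0) (hqΓ : qΓ ≠ 0) :
    ∃ q : ℝ → ℝ, IsBLProfile Dqi Dqe τi τe lC lam qΓ q ∧
      (∀ ξ : ℝ, ξ ≠ 0 → 0 < qΓ * q ξ) ∧
      (∀ q' : ℝ → ℝ, IsBLProfile Dqi Dqe τi τe lC lam qΓ q' →
        ∀ ξ : ℝ, ξ ≠ 0 → q' ξ = q ξ) ∧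
      ∃ Ci Ce : ℝ, 0 < Ci ∧ 0 < Ce ∧
        (fun ξ : ℝ => q ξ -
            qΓ * Ci * |ξ| ^ (-(|lam| * τi)⁻¹ - 1) *
              Real.exp (-(|lam| * ξ ^ 2) / (2 * Dqi))) =O[atBot]
          (fun ξ : ℝ => |ξ| ^ (-(|lam| * τi)⁻¹ - 1) *
              Real.exp (-(|lam| * ξ ^ 2) / (2 * Dqi)) * (ξ⁻¹) ^ 2) ∧
        (fun ξ : ℝ => q ξ -
            qΓ * Ce * ξ ^ (-(|lam| * τe)⁻¹ - 1) *
              Real.exp (-(|lam| * ξ ^ 2) / (2 * Dqe))) =O[atTop]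
          (fun ξ : ℝ => ξ ^ (-(|lam| * τe)⁻¹ - 1) *
              Real.exp (-(|lam| * ξ ^ 2) / (2 * Dqe)) * (ξ⁻¹) ^ 2) := by
  obtain ⟨vi, hi, hi0, hio, hip, hi1, hiI, Ai, hAi, hiO⟩ := halfLine_exists hDqi hτi hlam
  obtain ⟨ve, he, he0, heo, hep, he1, heI, Ae, hAe, heO⟩ := halfLine_exists hDqe hτe hlam
  have hIi := setIntegral_Ioi_zero_pos hiI fun s _ => hip s
  have hIe := setIntegral_Ioi_zero_pos heI fun s _ => hep s
  set Ii := ∫ ξ in Ioi (0:ℝ), vi ξ with hIi_def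
  set Ie := ∫ ξ in Ioi (0:ℝ), ve ξ with hIe_def
  set K := Ie + lC * Ii with hK
  have hK0 : 0 < K := by positivity
  -- the total charge of the profile with right limit `c` is `c * K`
  set c := qΓ / K with hc
  have hcK : c * K = qΓ := div_mul_cancel₀ _ hK0.ne'
  set q : ℝ → ℝ := fun ξ => if 0 < ξ then c * ve ξ else lC * c * vi (-ξ) with hq
  have hpos : ∀ ξ > 0, q ξ = c * ve ξ := fun ξ hξ => if_pos hξ
  have hneg : ∀ ξ < 0, q ξ = lC * c * vi (-ξ) := fun ξ hξ => if_neg hξ.le.not_gt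
  have hqc : 0 < qΓ * c := by
    rw [hc, ← mul_div_assoc]
    exact div_pos (mul_self_pos.2 hqΓ) hK0
  refine ⟨q, profile_glue hi he hi0 he0 hio heo hi1 he1 hiI heI hpos hneg ?_, ?_, ?_,
    lC / K * Ai, K⁻¹ * Ae, by positivity, by positivity, ?_, ?_⟩
  · rw [← hIi_def, ← hIe_def, ← hcK, hK]; ring
  · intro ξ hξ
    rcases hξ.lt_or_gt with h | h
    · rw [hneg ξ h]
      have := mul_pos (mul_pos hqc hlC) (hip (-ξ))
      linarith
    · rw [hpos ξ h]
      have := mul_pos hqc (hep ξ)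
      linarith
  · intro q' hq'
    obtain ⟨c', hpos', hneg', hc'⟩ :=
      profile_eq hDqi hDqe hτi hτe hi he hi0 he0 hio heo hi1 he1 hq'
    have hcc : c' = c := by
      rw [hc, eq_div_iff hK0.ne', ← hc', hK]; ring
    intro ξ hξ
    rcases hξ.lt_or_gt with h | h
    · rw [hneg ξ h, hneg' ξ h, hcc]
    · rw [hpos ξ h, hpos' ξ h, hcc]
  · refine ((hiO.comp_tendsto tendsto_neg_atBot_atTop).const_mul_left (lC * c)).congr' ?_ ?_
    · filter_upwards [eventually_lt_atBot 0] with ξ hξ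
      simp only [Function.comp, hneg ξ hξ, abs_of_neg hξ, neg_sq, ← hcK]
      field_simp
    · filter_upwards [eventually_lt_atBot 0] with ξ hξ
      simp only [Function.comp, abs_of_neg hξ, neg_sq, inv_neg]
  · refine (heO.const_mul_left c).congr' ?_ EventuallyEq.rfl
    filter_upwards [eventually_gt_atTop 0] with ξ hξ
    simp only [hpos ξ hξ, ← hcK]
    field_simp
end

section
/- Let a > 0 and let y₁, y₂ : (0,∞) → ℝ be twice differentiable functions, each satisfying y''(x) − x y'(x) − a y(x) = 0 for all x > 0 and each tending to 0 as x → ∞. Then y₁ and y₂ are linearly dependent: there exist real numbers c₁, c₂, not both zero, such that c₁ y₁(x) + c₂ y₂(x) = 0 for all x > 0. -/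
/-!
A decaying solution `y` that vanishes at `1` vanishes on all of `(0,∞)`. To the right of `1`, the
function `exp (-x²/2) y y'` has derivative `exp (-x²/2) (a y² + y'²) ≥ 0` and vanishes at `1`, so
`y y' ≥ 0` there; hence `y²` is nondecreasing on `[1,∞)`, and since it tends to `0` it is
identically `0`. Consequently `y(2) = y'(2) = 0`, and to the left of `2` the function
`exp ((1+a)x) (y² + y'²)` is nondecreasing, so it is `≤ 0` on `(0,2]`, which is a one-sided Gronwall
argument that is available because the coefficient `x` is positive.

Given two decaying solutions, apply this to `y₁` when `y₁(1) = 0`, and otherwise to the combination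
`y₂(1) y₁ - y₁(1) y₂`.
-/

open Filter

open Set

lemma monotoneOn_of_hasDerivAt_nonneg {s : Set ℝ} (hs : Convex ℝ s) {f f' : ℝ → ℝ}
    (hf : ∀ x ∈ s, HasDerivAt f (f' x) x) (hf' : ∀ x ∈ s, 0 ≤ f' x) : MonotoneOn f s :=
  monotoneOn_of_hasDerivWithinAt_nonneg hs
    (fun x hx => (hf x hx).continuousAt.continuousWithinAt)
    (fun x hx => (hf x (interior_subset hx)).hasDerivWithinAt)
    (fun x hx => hf' x (interior_subset hx))

/-- Forward half: `exp (-x²/2) y y'` is nondecreasing, so `y²` is nondecreasing on `[1,∞)`.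
The equation is written as the first-order system `y' = z`, `z' = x z + a y`. -/
lemma eq_zero_forward {a : ℝ} (ha : 0 < a) {y z : ℝ → ℝ}
    (hy : ∀ x > (0 : ℝ), HasDerivAt y (z x) x)
    (hz : ∀ x > (0 : ℝ), HasDerivAt z (x * z x + a * y x) x)
    (hlim : Tendsto y atTop (nhds 0)) (h1 : y 1 = 0) :
    ∀ x ≥ (1 : ℝ), y x = 0 := by
  have hG : MonotoneOn (fun x => Real.exp (-(x ^ 2 / 2)) * (y x * z x)) (Ioi 0) := by
    refine monotoneOn_of_hasDerivAt_nonneg (convex_Ioi 0)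
      (f' := fun x => Real.exp (-(x ^ 2 / 2)) * (a * y x ^ 2 + z x ^ 2)) (fun x hx => ?_)
      (fun x _ => by positivity)
    have he : HasDerivAt (fun x : ℝ => Real.exp (-(x ^ 2 / 2)))
        (Real.exp (-(x ^ 2 / 2)) * (-x)) x := by
      refine (((hasDerivAt_pow 2 x).div_const 2).fun_neg).exp.congr_deriv ?_
      push_cast
      ring
    refine (he.fun_mul ((hy x hx).fun_mul (hz x hx))).congr_deriv ?_
    ring
  have hyz : ∀ x ≥ (1 : ℝ), 0 ≤ y x * z x := fun x hx => by
    have h := hG (mem_Ioi.2 one_pos) (mem_Ioi.2 (one_pos.trans_le hx)) hx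
    simp only [h1, zero_mul, mul_zero] at h
    exact nonneg_of_mul_nonneg_right h (Real.exp_pos _)
  have hsq : MonotoneOn (fun x => y x ^ 2) (Ici 1) := by
    refine monotoneOn_of_hasDerivAt_nonneg (convex_Ici 1) (f' := fun x => 2 * (y x * z x))
      (fun x hx => ?_) (fun x hx => mul_nonneg two_pos.le (hyz x hx))
    refine ((hy x (one_pos.trans_le hx)).fun_pow 2).congr_deriv ?_
    push_cast
    ring
  have hlim2 : Tendsto (fun x => y x ^ 2) atTop (nhds 0) := by
    simpa using hlim.pow 2
  intro x hx
  have : y x ^ 2 ≤ 0 := by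
    refine ge_of_tendsto hlim2 ?_
    filter_upwards [eventually_ge_atTop x] with t ht
    exact hsq hx (hx.trans ht) ht
  exact pow_eq_zero_iff two_ne_zero |>.1 (le_antisymm this (sq_nonneg _))

/-- A decaying solution vanishing at `1` vanishes on `(0,∞)`; the part to the left of `1` is a
one-sided Gronwall estimate for `y² + y'²`. -/
lemma eq_zero_of_eq_zero_at_one {a : ℝ} (ha : 0 < a) {y z : ℝ → ℝ}
    (hy : ∀ x > (0 : ℝ), HasDerivAt y (z x) x)
    (hz : ∀ x > (0 : ℝ), HasDerivAt z (x * z x + a * y x) x)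
    (hlim : Tendsto y atTop (nhds 0)) (h1 : y 1 = 0) :
    ∀ x > (0 : ℝ), y x = 0 := by
  have hfw := eq_zero_forward ha hy hz hlim h1
  have hz2 : z 2 = 0 := by
    have h0 : HasDerivAt y 0 2 := by
      refine (hasDerivAt_const (2 : ℝ) (0 : ℝ)).congr_of_eventuallyEq ?_
      filter_upwards [Ioi_mem_nhds one_lt_two] with t ht
      exact hfw t (le_of_lt ht)
    exact (hy 2 two_pos).unique h0
  have hE : MonotoneOn (fun x => Real.exp ((1 + a) * x) * (y x ^ 2 + z x ^ 2)) (Ioi 0) := by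
    -- The derivative is `exp ((1+a)x)` times `(1+a)(y + z)² + 2 x z²`.
    refine monotoneOn_of_hasDerivAt_nonneg (convex_Ioi 0)
      (f' := fun x => Real.exp ((1 + a) * x) * ((1 + a) * (y x + z x) ^ 2 + 2 * x * z x ^ 2))
      (fun x hx => ?_) (fun x hx => ?_)
    · have he : HasDerivAt (fun x : ℝ => Real.exp ((1 + a) * x))
          (Real.exp ((1 + a) * x) * (1 + a)) x := by
        simpa using ((hasDerivAt_id' x).const_mul (1 + a)).exp
      refine (he.fun_mul (((hy x hx).fun_pow 2).fun_add ((hz x hx).fun_pow 2))).congr_deriv ?_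
      push_cast
      ring
    · have : 0 < x := hx
      positivity
  intro x hx
  rcases le_total 1 x with h | h
  · exact hfw x h
  · have h := hE (mem_Ioi.2 hx) (mem_Ioi.2 two_pos) (h.trans one_le_two)
    simp only [hfw 2 one_le_two, hz2, ne_eq, OfNat.ofNat_ne_zero, not_false_eq_true, zero_pow,
      add_zero, mul_zero] at h
    have h' := nonpos_of_mul_nonpos_right h (Real.exp_pos _)
    nlinarith [sq_nonneg (y x), sq_nonneg (z x)]

/-- For `a > 0`, the solutions of `y'' − x y' − a y = 0` on `(0,∞)` that decay
at infinity form a one-dimensional space: any two such solutions are linearly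
dependent. -/
theorem decaying_solutions_linearly_dependent (a : ℝ) (ha : 0 < a)
    (y₁ y₂ : ℝ → ℝ)
    (hy₁ : ∀ x > (0 : ℝ), DifferentiableAt ℝ y₁ x)
    (hy₁' : ∀ x > (0 : ℝ), DifferentiableAt ℝ (deriv y₁) x)
    (hode₁ : ∀ x > (0 : ℝ), deriv (deriv y₁) x - x * deriv y₁ x - a * y₁ x = 0)
    (hlim₁ : Tendsto y₁ atTop (nhds 0))
    (hy₂ : ∀ x > (0 : ℝ), DifferentiableAt ℝ y₂ x)
    (hy₂' : ∀ x > (0 : ℝ), DifferentiableAt ℝ (deriv y₂) x)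
    (hode₂ : ∀ x > (0 : ℝ), deriv (deriv y₂) x - x * deriv y₂ x - a * y₂ x = 0)
    (hlim₂ : Tendsto y₂ atTop (nhds 0)) :
    ∃ c₁ c₂ : ℝ, (c₁ ≠ 0 ∨ c₂ ≠ 0) ∧
      ∀ x > (0 : ℝ), c₁ * y₁ x + c₂ * y₂ x = 0 := by
  have hd₁ : ∀ x > (0 : ℝ), HasDerivAt y₁ (deriv y₁ x) x := fun x hx => (hy₁ x hx).hasDerivAt
  have hd₂ : ∀ x > (0 : ℝ), HasDerivAt y₂ (deriv y₂ x) x := fun x hx => (hy₂ x hx).hasDerivAt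
  have hs₁ : ∀ x > (0 : ℝ), HasDerivAt (deriv y₁) (x * deriv y₁ x + a * y₁ x) x := fun x hx =>
    (hy₁' x hx).hasDerivAt.congr_deriv (by linarith [hode₁ x hx])
  have hs₂ : ∀ x > (0 : ℝ), HasDerivAt (deriv y₂) (x * deriv y₂ x + a * y₂ x) x := fun x hx =>
    (hy₂' x hx).hasDerivAt.congr_deriv (by linarith [hode₂ x hx])
  by_cases h : y₁ 1 = 0
  · have := eq_zero_of_eq_zero_at_one ha hd₁ hs₁ hlim₁ h
    exact ⟨1, 0, Or.inl one_ne_zero, fun x hx => by simp [this x hx]⟩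
  · refine ⟨y₂ 1, -y₁ 1, Or.inr (neg_ne_zero.2 h), ?_⟩
    refine eq_zero_of_eq_zero_at_one ha (y := fun x => y₂ 1 * y₁ x + -y₁ 1 * y₂ x)
      (z := fun x => y₂ 1 * deriv y₁ x + -y₁ 1 * deriv y₂ x) (fun x hx => ?_) (fun x hx => ?_)
      ?_ (by ring)
    · exact ((hd₁ x hx).const_mul _).add ((hd₂ x hx).const_mul _)
    · exact (((hs₁ x hx).const_mul (y₂ 1)).add ((hs₂ x hx).const_mul (-y₁ 1))).congr_deriv
        (by ring)
    · simpa using (hlim₁.const_mul (y₂ 1)).add (hlim₂.const_mul (-y₁ 1))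
end

section
/- Let a > 0 and let y : [0,∞) → ℝ be continuous, twice differentiable on (0,∞), and satisfy y''(x) − x y'(x) − a y(x) = 0 for all x > 0. If y(0) > 0 and y(x) → 0 as x → ∞, then y(x) > 0 for every x ≥ 0. -/
open Filter Set

/-!
Two monotone quantities replace the maximum principle and the Picard–Lindelöf theorem.

The equation says `(e^{-x²/2} y')' = a e^{-x²/2} y`, so `e^{-x²/2} y y'` has derivative
`e^{-x²/2} (y'² + a y²) ≥ 0`. If `y` vanishes at some `z > 0`, then `y y' ≥ 0` on `[z, ∞)`, so `y²`
is nondecreasing there; as it tends to `0` at infinity, `y = 0` on `[z, ∞)`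
(`eq_zero_of_zero_of_tendsto`).

Vanishing then propagates back to `0`: `G = y² + y'²` satisfies
`G' = 2 (1 + a) y y' + 2 x y'² ≥ -(1 + a) G`, so `e^{(1+a)x} G` is nondecreasing, and a zero of `G`
forces `G = 0` to its left (`eq_zero_of_cauchyData_eq_zero`). By continuity `y 0 = 0`.
Hence a solution with `y 0 > 0` has no zero, and the intermediate value theorem gives positivity.
-/

/-- A function with nonnegative derivative on `(0, ∞)` is monotone there. -/
lemma monotoneOn_Ioi_of_hasDerivAt_nonneg {f f' : ℝ → ℝ}
    (hf : ∀ x > (0 : ℝ), HasDerivAt f (f' x) x) (hf' : ∀ x > (0 : ℝ), 0 ≤ f' x) :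
    MonotoneOn f (Ioi 0) := by
  refine monotoneOn_of_deriv_nonneg (convex_Ioi 0)
    (fun x hx => (hf x hx).continuousAt.continuousWithinAt) ?_ ?_
  · rw [interior_Ioi]
    exact fun x hx => (hf x hx).differentiableAt.differentiableWithinAt
  · rw [interior_Ioi]
    exact fun x hx => (hf x hx).deriv ▸ hf' x hx

lemma eq_zero_of_zero_of_tendsto {a : ℝ} (ha : 0 < a) {y : ℝ → ℝ}
    (hy : ∀ x > (0 : ℝ), DifferentiableAt ℝ y x)
    (hy' : ∀ x > (0 : ℝ), DifferentiableAt ℝ (deriv y) x)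
    (hode : ∀ x > (0 : ℝ), deriv (deriv y) x - x * deriv y x - a * y x = 0)
    (hlim : Tendsto y atTop (nhds 0)) {z : ℝ} (hz : 0 < z) (hyz : y z = 0) :
    ∀ x ≥ z, y x = 0 := by
  have hmono : MonotoneOn (fun x => Real.exp (-(x ^ 2 / 2)) * (y x * deriv y x)) (Ioi 0) := by
    refine monotoneOn_Ioi_of_hasDerivAt_nonneg
      (f' := fun x => Real.exp (-(x ^ 2 / 2)) * (deriv y x ^ 2 + a * y x ^ 2)) ?_ ?_
    · intro x hx
      have h1 : HasDerivAt (fun x : ℝ => Real.exp (-(x ^ 2 / 2)))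
          (Real.exp (-(x ^ 2 / 2)) * (-x)) x := by
        have h2 : HasDerivAt (fun x : ℝ => -(x ^ 2 / 2)) (-x) x :=
          ((hasDerivAt_pow 2 x).div_const 2).neg.congr_deriv (by norm_num)
        exact h2.exp
      refine (h1.mul ((hy x hx).hasDerivAt.mul (hy' x hx).hasDerivAt)).congr_deriv ?_
      simp only [Pi.mul_apply]
      linear_combination Real.exp (-(x ^ 2 / 2)) * y x * hode x hx
    · intro x _
      positivity
  have hsq : MonotoneOn (fun x => y x ^ 2) (Ici z) := by
    have hd : ∀ x > (0 : ℝ), HasDerivAt (fun x => y x ^ 2) (2 * (y x * deriv y x)) x :=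
      fun x hx => ((hy x hx).hasDerivAt.pow 2).congr_deriv (by norm_num; ring)
    refine monotoneOn_of_deriv_nonneg (convex_Ici z)
      (fun x hx => (hd x (hz.trans_le hx)).continuousAt.continuousWithinAt) ?_ ?_
    · rw [interior_Ici]
      exact fun x hx => (hd x (hz.trans hx)).differentiableAt.differentiableWithinAt
    · rw [interior_Ici]
      intro x hx
      have hx0 : 0 < x := hz.trans hx
      rw [(hd x hx0).deriv]
      have h := hmono hz hx0 (le_of_lt hx)
      simp only [hyz, zero_mul, mul_zero] at h
      have := nonneg_of_mul_nonneg_right h (Real.exp_pos _)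
      positivity
  intro x hx
  have hlim2 : Tendsto (fun x => y x ^ 2) atTop (nhds 0) := by simpa using hlim.pow 2
  have hle : y x ^ 2 ≤ 0 := by
    refine ge_of_tendsto hlim2 ?_
    filter_upwards [eventually_ge_atTop x] with t ht
    exact hsq hx (le_trans hx ht) ht
  exact pow_eq_zero_iff two_ne_zero |>.1 (le_antisymm hle (sq_nonneg _))

/-- Backward uniqueness, by a one-sided Grönwall estimate for `y² + y'²`. -/
lemma eq_zero_of_cauchyData_eq_zero {a : ℝ} (ha : 0 < a) {y : ℝ → ℝ}
    (hy : ∀ x > (0 : ℝ), DifferentiableAt ℝ y x)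
    (hy' : ∀ x > (0 : ℝ), DifferentiableAt ℝ (deriv y) x)
    (hode : ∀ x > (0 : ℝ), deriv (deriv y) x - x * deriv y x - a * y x = 0)
    {b : ℝ} (hb : 0 < b) (hyb : y b = 0) (hyb' : deriv y b = 0) :
    ∀ x > 0, x ≤ b → y x = 0 := by
  have hmono : MonotoneOn (fun x => Real.exp ((1 + a) * x) * (y x ^ 2 + deriv y x ^ 2))
      (Ioi 0) := by
    refine monotoneOn_Ioi_of_hasDerivAt_nonneg
      (f' := fun x => Real.exp ((1 + a) * x) *
        ((1 + a) * (y x + deriv y x) ^ 2 + 2 * x * deriv y x ^ 2)) ?_ ?_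
    · intro x hx
      have h1 : HasDerivAt (fun x : ℝ => Real.exp ((1 + a) * x))
          (Real.exp ((1 + a) * x) * (1 + a)) x := by
        simpa using ((hasDerivAt_id x).const_mul (1 + a)).exp
      refine (h1.mul (((hy x hx).hasDerivAt.pow 2).add
        ((hy' x hx).hasDerivAt.pow 2))).congr_deriv ?_
      simp only [Pi.add_apply, Pi.pow_apply]
      norm_num
      linear_combination 2 * Real.exp ((1 + a) * x) * deriv y x * hode x hx
    · intro x hx
      positivity
  intro x hx hxb
  have h := hmono hx hb hxb
  simp only [hyb, hyb'] at h
  have h2 : y x ^ 2 + deriv y x ^ 2 ≤ 0 := by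
    refine nonpos_of_mul_nonpos_right ?_ (Real.exp_pos ((1 + a) * x))
    simpa using h
  nlinarith [sq_nonneg (y x), sq_nonneg (deriv y x)]

/-- Maximum principle for `y'' − x y' − a y = 0` with `a > 0`: a solution that
is positive at `0` and decays at infinity is positive on all of `[0,∞)`. -/
theorem decaying_solution_positive (a : ℝ) (ha : 0 < a) (y : ℝ → ℝ)
    (hcont : ContinuousOn y (Ici 0))
    (hy : ∀ x > (0 : ℝ), DifferentiableAt ℝ y x)
    (hy' : ∀ x > (0 : ℝ), DifferentiableAt ℝ (deriv y) x)
    (hode : ∀ x > (0 : ℝ), deriv (deriv y) x - x * deriv y x - a * y x = 0)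
    (h0 : 0 < y 0) (hlim : Tendsto y atTop (nhds 0)) :
    ∀ x ≥ (0 : ℝ), 0 < y x := by
  intro c hc
  by_contra! hyc
  obtain ⟨z, hzmem, hyz⟩ : (0 : ℝ) ∈ y '' Icc 0 c :=
    intermediate_value_Icc' hc (hcont.mono Icc_subset_Ici_self) ⟨hyc, h0.le⟩
  have hz : 0 < z := lt_of_le_of_ne hzmem.1 (by rintro rfl; exact h0.ne' hyz)
  have hright := eq_zero_of_zero_of_tendsto ha hy hy' hode hlim hz hyz
  -- `y` vanishes on a neighbourhood of `z + 1`, so its derivative does too.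
  have hd : deriv y (z + 1) = 0 := by
    have : y =ᶠ[nhds (z + 1)] fun _ => 0 := by
      filter_upwards [lt_mem_nhds (lt_add_one z)] with t ht using hright t ht.le
    rw [this.deriv_eq, deriv_const]
  have hleft := eq_zero_of_cauchyData_eq_zero ha hy hy' hode (by linarith : 0 < z + 1)
    (hright _ (by linarith)) hd
  have hlim0 : Tendsto y (nhdsWithin 0 (Ioi 0)) (nhds (y 0)) :=
    (hcont 0 self_mem_Ici).mono_left (nhdsWithin_mono _ Ioi_subset_Ici_self)
  obtain ⟨t, hpos, ht⟩ := ((hlim0.eventually (lt_mem_nhds h0)).and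
    (Ioo_mem_nhdsGT (by linarith : 0 < z + 1))).exists
  exact hpos.ne' (hleft t ht.1 ht.2.le)
end

section
/- Let a > 0 and let y : [0,∞) → ℝ be continuous, twice differentiable on (0,∞), and satisfy y''(x) + x y'(x) − a y(x) = 0 for all x > 0. If y(0) > 0 and y(x) → 0 as x → ∞, then y(x) > 0 for every x ≥ 0. -/
/-!
The equation gives `(y y')' = a y² + y'² - x y y'`, so with the integrating factor
`exp (x²/2)` the function `exp (x²/2) y y'` has derivative `exp (x²/2) (a y² + y'²) ≥ 0` and is
monotone on `(0,∞)`. If `y` had a zero `c > 0`, this function would be nonnegative on `[c,∞)`,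
hence `y²` would be monotone there; since it tends to `0`, `y` would vanish on `[c,∞)`
(`eq_zero_of_decay`). Uniqueness backwards in time (`eq_zero_of_cauchy_data_zero`) then forces
`y = 0` on `(0,∞)`, contradicting `y 0 > 0`. A nonpositive value of `y` produces such a zero `c`
by the intermediate value theorem.
-/

open Filter Set

/-- Weak form of the maximum principle: a decaying solution that vanishes at `c` vanishes on
`[c,∞)`. -/
lemma eq_zero_of_decay {a : ℝ} (ha : 0 < a) {y z : ℝ → ℝ}
    (hy : ∀ x > (0 : ℝ), HasDerivAt y (z x) x)
    (hz : ∀ x > (0 : ℝ), HasDerivAt z (a * y x - x * z x) x)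
    (hlim : Tendsto y atTop (nhds 0)) {c : ℝ} (hc : 0 < c) (hyc : y c = 0) :
    ∀ x ≥ c, y x = 0 := by
  have hp : ∀ x > (0 : ℝ), HasDerivAt (fun t => Real.exp (t ^ 2 / 2) * (y t * z t))
      (Real.exp (x ^ 2 / 2) * (a * y x ^ 2 + z x ^ 2)) x := by
    intro x hx
    have he : HasDerivAt (fun t : ℝ => Real.exp (t ^ 2 / 2)) (Real.exp (x ^ 2 / 2) * x) x :=
      (((hasDerivAt_id' x).pow 2).div_const 2).exp.congr_deriv (by simp)
    exact (he.mul ((hy x hx).mul (hz x hx))).congr_deriv (by simp only [Pi.mul_apply]; ring)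
  have hmono : MonotoneOn (fun t => Real.exp (t ^ 2 / 2) * (y t * z t)) (Ioi 0) := by
    refine monotoneOn_of_hasDerivWithinAt_nonneg (convex_Ioi 0)
      (fun x hx => (hp x hx).continuousAt.continuousWithinAt)
      (fun x hx => (hp x (interior_subset hx)).hasDerivWithinAt) (fun x _ => by positivity)
  have hyz : ∀ x ≥ c, 0 ≤ y x * z x := by
    intro x hx
    have h := hmono (mem_Ioi.2 hc) (mem_Ioi.2 (hc.trans_le hx)) hx
    simp only [hyc, zero_mul, mul_zero] at h
    exact nonneg_of_mul_nonneg_right h (Real.exp_pos _)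
  have hsq : MonotoneOn (fun t => y t ^ 2) (Ici c) := by
    have hd : ∀ x ∈ Ici c, HasDerivAt (fun t => y t ^ 2) (2 * (y x * z x)) x := fun x hx =>
      ((hy x (hc.trans_le hx)).pow 2).congr_deriv (by simp; ring)
    exact monotoneOn_of_hasDerivWithinAt_nonneg (convex_Ici c)
      (fun x hx => (hd x hx).continuousAt.continuousWithinAt)
      (fun x hx => (hd x (interior_subset hx)).hasDerivWithinAt)
      (fun x hx => mul_nonneg zero_le_two (hyz x (interior_subset hx)))
  intro x hx
  have hle : y x ^ 2 ≤ 0 := by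
    have hl : Tendsto (fun t => y t ^ 2) atTop (nhds 0) := by simpa using hlim.pow 2
    refine ge_of_tendsto hl ?_
    filter_upwards [eventually_ge_atTop x] with t ht
    exact hsq hx (le_trans hx ht) ht
  exact pow_eq_zero_iff two_ne_zero |>.1 (le_antisymm hle (sq_nonneg _))

/-- Backward uniqueness, by a Grönwall estimate: the energy `y² + z²` decreases at most at an
exponential rate on `(0,d]`. -/
lemma eq_zero_of_cauchy_data_zero {a : ℝ} (ha : 0 < a) {y z : ℝ → ℝ}
    (hy : ∀ x > (0 : ℝ), HasDerivAt y (z x) x)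
    (hz : ∀ x > (0 : ℝ), HasDerivAt z (a * y x - x * z x) x)
    {d : ℝ} (hyd : y d = 0) (hzd : z d = 0) :
    ∀ x ∈ Ioc 0 d, y x = 0 := by
  have hG : ∀ x > (0 : ℝ), HasDerivAt
      (fun t => Real.exp ((1 + a + 2 * d) * t) * (y t ^ 2 + z t ^ 2))
      (Real.exp ((1 + a + 2 * d) * x) * ((1 + a) * (y x + z x) ^ 2 + 2 * d * y x ^ 2
        + 2 * (d - x) * z x ^ 2)) x := by
    intro x hx
    have he := ((hasDerivAt_id' x).const_mul (1 + a + 2 * d)).exp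
    exact (he.mul (((hy x hx).pow 2).add ((hz x hx).pow 2))).congr_deriv
      (by simp; ring)
  have hmono : MonotoneOn (fun t => Real.exp ((1 + a + 2 * d) * t) * (y t ^ 2 + z t ^ 2))
      (Ioc 0 d) := by
    refine monotoneOn_of_hasDerivWithinAt_nonneg (convex_Ioc 0 d)
      (fun x hx => (hG x hx.1).continuousAt.continuousWithinAt)
      (fun x hx => (hG x (interior_subset hx).1).hasDerivWithinAt) (fun x hx => ?_)
    have hx' := interior_subset hx
    have h1 : 0 ≤ d - x := sub_nonneg.2 hx'.2
    have h2 : 0 ≤ d := hx'.1.le.trans hx'.2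
    positivity
  intro x hx
  have h := hmono hx ⟨hx.1.trans_le hx.2, le_rfl⟩ hx.2
  simp only [hyd, hzd] at h
  have h' : y x ^ 2 + z x ^ 2 ≤ 0 :=
    nonpos_of_mul_nonpos_right (by simpa using h) (Real.exp_pos ((1 + a + 2 * d) * x))
  exact pow_eq_zero_iff two_ne_zero |>.1 (by nlinarith [sq_nonneg (y x), sq_nonneg (z x)])

/-- Maximum principle for `y'' + x y' − a y = 0` with `a > 0`: a solution that
is positive at `0` and decays at infinity is positive on all of `[0,∞)`. -/
theorem decaying_solution_positive' (a : ℝ) (ha : 0 < a) (y : ℝ → ℝ)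
    (hcont : ContinuousOn y (Ici 0))
    (hy : ∀ x > (0 : ℝ), DifferentiableAt ℝ y x)
    (hy' : ∀ x > (0 : ℝ), DifferentiableAt ℝ (deriv y) x)
    (hode : ∀ x > (0 : ℝ), deriv (deriv y) x + x * deriv y x - a * y x = 0)
    (h0 : 0 < y 0) (hlim : Tendsto y atTop (nhds 0)) :
    ∀ x ≥ (0 : ℝ), 0 < y x := by
  intro b hb
  by_contra! hyb
  have hd : ∀ x > (0 : ℝ), HasDerivAt y (deriv y x) x := fun x hx => (hy x hx).hasDerivAt
  have hd' : ∀ x > (0 : ℝ), HasDerivAt (deriv y) (a * y x - x * deriv y x) x := fun x hx =>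
    (hy' x hx).hasDerivAt.congr_deriv (by linarith [hode x hx])
  obtain ⟨c, hc, hyc⟩ := intermediate_value_Icc' hb (hcont.mono Icc_subset_Ici_self)
    (show (0 : ℝ) ∈ Icc (y b) (y 0) from ⟨hyb, h0.le⟩)
  have hc0 : 0 < c := by
    refine lt_of_le_of_ne hc.1 ?_
    rintro rfl
    exact h0.ne' hyc
  have hright := eq_zero_of_decay ha hd hd' hlim hc0 hyc
  -- `c + 1` is interior to the zero set, so the derivative vanishes there as well.
  have hzd : deriv y (c + 1) = 0 := by
    have he : y =ᶠ[nhds (c + 1)] fun _ => 0 := by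
      filter_upwards [eventually_gt_nhds (lt_add_one c)] with t ht using hright t ht.le
    rw [he.deriv_eq, deriv_const]
  have hleft := eq_zero_of_cauchy_data_zero ha hd hd' (hright (c + 1) (by linarith)) hzd
  have hlim0 : Tendsto y (nhdsWithin 0 (Ioi 0)) (nhds (y 0)) :=
    (hcont 0 self_mem_Ici).mono_left (nhdsWithin_mono 0 Ioi_subset_Ici_self)
  have hev : ∀ᶠ t in nhdsWithin (0 : ℝ) (Ioi 0), y t ≤ 0 := by
    filter_upwards [Ioc_mem_nhdsGT (show (0 : ℝ) < c + 1 by linarith)] with t ht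
    exact (hleft t ht).le
  exact absurd (le_of_tendsto hlim0 hev) (not_le.2 h0)
end

section
/- Let a > 0 and let y : (0,∞) → ℝ be a twice differentiable function satisfying y''(x) + x y'(x) − a y(x) = 0 for all x > 0 and y(x) → 0 as x → ∞. Then y is integrable on (0,∞); in fact ∫₀^∞ |y(x)| dx < ∞ for every a > 0. -/
/-! The endpoints `∞` and `0` are treated separately.

At infinity, `w x = x⁻²` is a supersolution on `[2,∞)`: `w'' + x w' - a w = 6x⁻⁴ - (2 + a)x⁻² ≤ 0`.
Since `a > 0`, the maximum principle applies to `M w ∓ y`, which vanishes at infinity and is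
nonnegative at `2` once `M ≥ 4 |y 2|`; hence `|y| ≤ M x⁻²` on `[2,∞)`
(`nonneg_of_tendsto_zero`, `decaying_solution_le`).

Near `0`, the energy `E = y² + y'²` satisfies `E' ≥ -(a + 5) E` on `(0,2]`, so `E` times
`exp ((a + 5) x)` is monotone there and `y` is bounded (`solution_bounded`).

A continuous function with these two bounds is integrable on `(0,∞)`. -/

open Filter Set MeasureTheory

/-- Maximum principle: a function that is nonnegative at `2`, tends to zero at infinity, and has
negative second derivative at each negative critical point cannot become negative, since a
negative minimum would be attained in the interior. -/
lemma nonneg_of_tendsto_zero (u : ℝ → ℝ) (hc : ∀ x > (0 : ℝ), ContinuousAt u x)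
    (hlim : Tendsto u atTop (nhds 0)) (h2 : 0 ≤ u 2)
    (hneg : ∀ x > (2 : ℝ), deriv u x = 0 → u x < 0 → deriv (deriv u) x < 0) :
    ∀ x ≥ (2 : ℝ), 0 ≤ u x := by
  intro x₀ hx₀
  by_contra! h
  obtain ⟨R, hR⟩ := eventually_atTop.1 (hlim.eventually (lt_mem_nhds h))
  have hx₀R : x₀ < R := by
    by_contra! h'
    exact lt_irrefl _ (hR x₀ h')
  have hcont : ContinuousOn u (Icc 2 R) := fun x hx =>
    (hc x (by linarith [hx.1])).continuousWithinAt
  obtain ⟨c, hcm, hmin⟩ := isCompact_Icc.exists_isMinOn ⟨x₀, hx₀, hx₀R.le⟩ hcont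
  have hcx : u c ≤ u x₀ := hmin ⟨hx₀, hx₀R.le⟩
  have hc2 : 2 < c := by
    rcases hcm.1.eq_or_lt with h' | h'
    · rw [← h'] at hcx; linarith
    · exact h'
  have hcR : c < R := by
    rcases hcm.2.eq_or_lt with h' | h'
    · have := hR R le_rfl
      rw [h'] at hcx; linarith
    · exact h'
  have hlmin : IsLocalMin u c := hmin.isLocalMin (Icc_mem_nhds hc2 hcR)
  have hd := hlmin.deriv_eq_zero
  have hdd := hneg c hc2 hd (by linarith)
  have hlmax : IsLocalMax u c := isLocalMax_of_deriv_deriv_neg hdd hd (hc c (by linarith))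
  -- A point that is both a local minimum and a local maximum has zero second derivative.
  have heq : u =ᶠ[nhds c] fun _ => u c := by
    filter_upwards [hlmin, hlmax] with x h1 h3
    exact le_antisymm h3 h1
  have h0 : deriv (deriv u) c = 0 := by
    rw [heq.deriv.deriv_eq]
    simp
  linarith

/-- Comparison with the supersolution `4 |y 2| x⁻²`. -/
lemma decaying_solution_le (a : ℝ) (ha : 0 < a) (y : ℝ → ℝ)
    (hy : ∀ x > (0 : ℝ), DifferentiableAt ℝ y x)
    (hy' : ∀ x > (0 : ℝ), DifferentiableAt ℝ (deriv y) x)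
    (hode : ∀ x > (0 : ℝ), deriv (deriv y) x + x * deriv y x - a * y x = 0)
    (hlim : Tendsto y atTop (nhds 0)) :
    ∀ x ≥ (2 : ℝ), y x ≤ 4 * |y 2| * (x⁻¹) ^ 2 := by
  set M := 4 * |y 2| with hM
  have hM0 : 0 ≤ M := by positivity
  have hd : ∀ x > (0 : ℝ), HasDerivAt (fun x => M * (x⁻¹) ^ 2 - y x)
      (-2 * M * (x⁻¹) ^ 3 - deriv y x) x := by
    intro x hx
    have h := (((hasDerivAt_inv hx.ne').fun_pow 2).const_mul M).fun_sub (hy x hx).hasDerivAt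
    refine h.congr_deriv ?_
    push_cast
    ring
  have hdd : ∀ x > (0 : ℝ), deriv (deriv (fun x => M * (x⁻¹) ^ 2 - y x)) x =
      6 * M * (x⁻¹) ^ 4 - deriv (deriv y) x := by
    intro x hx
    have he : deriv (fun x => M * (x⁻¹) ^ 2 - y x) =ᶠ[nhds x]
        fun x => -2 * M * (x⁻¹) ^ 3 - deriv y x := by
      filter_upwards [lt_mem_nhds hx] with z hz using (hd z hz).deriv
    rw [he.deriv_eq]
    have h := (((hasDerivAt_inv hx.ne').fun_pow 3).const_mul (-2 * M)).fun_sub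
      (hy' x hx).hasDerivAt
    rw [h.deriv]
    push_cast
    ring
  have key := nonneg_of_tendsto_zero (fun x => M * (x⁻¹) ^ 2 - y x)
    (fun x hx => (hd x hx).continuousAt)
    (by simpa using ((tendsto_inv_atTop_zero (𝕜 := ℝ)).pow 2 |>.const_mul M).sub hlim)
    (by
      have := le_abs_self (y 2)
      simp only [hM]
      nlinarith)
    (by
      intro x hx h1 h0
      have hx0 : (0 : ℝ) < x := by linarith
      rw [(hd x hx0).deriv] at h1
      rw [hdd x hx0]
      have h3 := hode x hx0
      have h4 : x * x⁻¹ = 1 := mul_inv_cancel₀ hx0.ne'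
      have h5 : x⁻¹ ≤ 1 / 2 := by
        rw [inv_le_comm₀ hx0 (by norm_num)]; norm_num; exact hx.le
      have h6 : 0 < x⁻¹ := inv_pos.2 hx0
      generalize x⁻¹ = t at *
      have h7 : x * deriv y x = -2 * M * t ^ 2 := by
        have : deriv y x = -2 * M * t ^ 3 := by linarith
        rw [this]
        linear_combination (-2 * M * t ^ 2) * h4
      have h8 : M * t ^ 2 * t ^ 2 ≤ M * t ^ 2 * (1 / 4) := by
        apply mul_le_mul_of_nonneg_left _ (by positivity)
        nlinarith
      have h9 : 0 ≤ M * t ^ 2 := by positivity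
      have h10 : 0 < a * y x := mul_pos ha (by linarith)
      nlinarith)
  intro x hx
  have := key x hx
  linarith

/-- Energy estimate: `(y² + y'²) exp ((a + 5) x)` is monotone on `(0,2]`. -/
lemma solution_bounded (a : ℝ) (ha : 0 < a) (y : ℝ → ℝ)
    (hy : ∀ x > (0 : ℝ), DifferentiableAt ℝ y x)
    (hy' : ∀ x > (0 : ℝ), DifferentiableAt ℝ (deriv y) x)
    (hode : ∀ x > (0 : ℝ), deriv (deriv y) x + x * deriv y x - a * y x = 0) :
    ∃ C, ∀ x ∈ Ioc (0 : ℝ) 2, |y x| ≤ C := by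
  set F : ℝ → ℝ := fun x => (y x ^ 2 + deriv y x ^ 2) * Real.exp ((a + 5) * x) with hF
  have hd : ∀ x > (0 : ℝ), HasDerivAt F
      ((2 * y x * deriv y x + 2 * deriv y x * deriv (deriv y) x
        + (a + 5) * (y x ^ 2 + deriv y x ^ 2)) * Real.exp ((a + 5) * x)) x := by
    intro x hx
    have h := (((hy x hx).hasDerivAt.fun_pow 2).fun_add ((hy' x hx).hasDerivAt.fun_pow 2)).fun_mul
      (((hasDerivAt_id x).const_mul (a + 5)).exp)
    refine h.congr_deriv ?_
    push_cast
    simp only [id]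
    ring
  have hmono : MonotoneOn F (Ioc 0 2) := by
    apply monotoneOn_of_deriv_nonneg (convex_Ioc 0 2)
    · exact fun x hx => (hd x hx.1).continuousAt.continuousWithinAt
    · intro x hx
      rw [interior_Ioc] at hx
      exact (hd x hx.1).differentiableAt.differentiableWithinAt
    · intro x hx
      rw [interior_Ioc] at hx
      rw [(hd x hx.1).deriv]
      apply mul_nonneg _ (Real.exp_pos _).le
      have h2 : deriv (deriv y) x = a * y x - x * deriv y x := by linarith [hode x hx.1]
      rw [h2]
      generalize deriv y x = p
      generalize y x = q
      -- The expression splits into three terms, each nonnegative for `x ≤ 2`.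
      have h3 : 0 ≤ (1 + a) * (q + p) ^ 2 := by positivity
      have h4 : 0 ≤ (2 - x) * p ^ 2 := mul_nonneg (by linarith [hx.2]) (sq_nonneg p)
      nlinarith [sq_nonneg q]
  refine ⟨√(F 2), fun x hx => Real.abs_le_sqrt ?_⟩
  have h1 : F x ≤ F 2 := hmono hx ⟨by norm_num, le_rfl⟩ hx.2
  have h2 : 1 ≤ Real.exp ((a + 5) * x) :=
    Real.one_le_exp (mul_nonneg (by linarith) hx.1.le)
  have h3 : y x ^ 2 + deriv y x ^ 2 ≤ F x :=
    le_mul_of_one_le_right (by positivity) h2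
  nlinarith [sq_nonneg (deriv y x)]

/-- Any decaying solution of `y'' + x y' − a y = 0` on `(0,∞)` (with `a > 0`)
is integrable on `(0,∞)`. -/
theorem decaying_solution_integrable (a : ℝ) (ha : 0 < a) (y : ℝ → ℝ)
    (hy : ∀ x > (0 : ℝ), DifferentiableAt ℝ y x)
    (hy' : ∀ x > (0 : ℝ), DifferentiableAt ℝ (deriv y) x)
    (hode : ∀ x > (0 : ℝ), deriv (deriv y) x + x * deriv y x - a * y x = 0)
    (hlim : Tendsto y atTop (nhds 0)) :
    IntegrableOn y (Ioi 0) := by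
  have hcont : ContinuousOn y (Ioi 0) := fun x hx =>
    (hy x hx).continuousAt.continuousWithinAt
  have hmeas : AEStronglyMeasurable y (volume.restrict (Ioi 0)) :=
    hcont.aestronglyMeasurable measurableSet_Ioi
  obtain ⟨C, hC⟩ := solution_bounded a ha y hy hy' hode
  have hup := decaying_solution_le a ha y hy hy' hode hlim
  have hdn : ∀ x ≥ (2 : ℝ), -y x ≤ 4 * |y 2| * (x⁻¹) ^ 2 := by
    have hn : deriv (fun x => -y x) = fun x => -deriv y x := by
      funext x; exact deriv.fun_neg
    have hnn : deriv (fun x => -deriv y x) = fun x => -deriv (deriv y) x := by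
      funext x; exact deriv.fun_neg
    have h := decaying_solution_le a ha (fun x => -y x) (fun x hx => (hy x hx).fun_neg)
      (by rw [hn]; exact fun x hx => (hy' x hx).fun_neg)
      (by
        rw [hn, hnn]
        intro x hx
        linarith [hode x hx])
      (by simpa using hlim.neg)
    simpa only [abs_neg] using h
  rw [← Ioc_union_Ioi_eq_Ioi (show (0 : ℝ) ≤ 2 by norm_num)]
  refine IntegrableOn.union ?_ ?_
  · refine Integrable.mono' (integrableOn_const (C := C) (by simp))
      (hmeas.mono_set Ioc_subset_Ioi_self) ?_
    filter_upwards [ae_restrict_mem measurableSet_Ioc] with x hx using hC x hx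
  · have hw : IntegrableOn (fun x : ℝ => 4 * |y 2| * x ^ (-2 : ℝ)) (Ioi 2) :=
      (integrableOn_Ioi_rpow_of_lt (by norm_num) (by norm_num)).const_mul _
    refine Integrable.mono' hw (hmeas.mono_set (Ioi_subset_Ioi (by norm_num))) ?_
    filter_upwards [ae_restrict_mem measurableSet_Ioi] with x hx
    have hx' : (2 : ℝ) < x := hx
    have hr : x ^ (-2 : ℝ) = (x⁻¹) ^ 2 := by
      rw [Real.rpow_neg (by linarith), inv_pow]
      norm_cast
    rw [hr, Real.norm_eq_abs]
    exact abs_le'.2 ⟨hup x hx'.le, hdn x hx'.le⟩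
end

section
/- Let ρ > 0 and ζ > 0, and define A₊ = (√(ρ(ρ+ζ)) − √(1+ρζ))/(√(ρ(ρ+ζ)) + √(1+ρζ)) and A₋ = (√(ρ+ζ) − √(ρ(1+ρζ)))/(√(ρ+ζ) + √(ρ(1+ρζ))). Define φ^Δ_i = −2 ln((1+A₋)/(1−A₋)) and φ^Δ_e = 2 ln((1+A₊)/(1−A₊)). Then φ^Δ_i + φ^Δ_e = 2 ln ρ, and φ^Δ_i and φ^Δ_e have the same sign: both are positive if ρ > 1, both are negative if ρ < 1, and both vanish if ρ = 1. -/
/-!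
The map `A ↦ (1 + A) / (1 - A)` inverts `r ↦ (r - 1) / (r + 1)`, so each constant `A` is the
image of a ratio of square roots and each voltage drop is a difference of logarithms:
`φ^Δ_e = log (ρ (ρ + ζ)) - log (1 + ρ ζ)` and `φ^Δ_i = log (ρ (1 + ρ ζ)) - log (ρ + ζ)`.
The sum telescopes to `2 log ρ`. The signs follow from monotonicity of `log`, since
`ρ (ρ + ζ) - (1 + ρ ζ) = ρ² - 1` and `ρ (1 + ρ ζ) - (ρ + ζ) = ζ (ρ² - 1)`.
-/

/-- The factor `2` absorbs the square roots in the ratio `√a / √b` recovered from `A`. -/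
theorem two_mul_log_ratio {a b A : ℝ} (ha : 0 < a) (hb : 0 < b)
    (hA : A = (Real.sqrt a - Real.sqrt b) / (Real.sqrt a + Real.sqrt b)) :
    2 * Real.log ((1 + A) / (1 - A)) = Real.log a - Real.log b := by
  have hsa := Real.sqrt_pos.2 ha
  have hsb := Real.sqrt_pos.2 hb
  have hs : Real.sqrt a + Real.sqrt b ≠ 0 := by positivity
  have h1 : 1 + A = 2 * Real.sqrt a / (Real.sqrt a + Real.sqrt b) := by
    rw [hA]; field_simp; ring
  have h2 : 1 - A = 2 * Real.sqrt b / (Real.sqrt a + Real.sqrt b) := by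
    rw [hA]; field_simp; ring
  have h3 : (1 + A) / (1 - A) = Real.sqrt a / Real.sqrt b := by
    rw [h1, h2]; field_simp
  rw [h3, Real.log_div hsa.ne' hsb.ne', Real.log_sqrt ha.le, Real.log_sqrt hb.le]
  ring

/-- The interior and exterior Debye-layer voltage drops `φ^Δ_i`, `φ^Δ_e` sum to
the Galvani potential `2 ln ρ` and have the same sign as `ln ρ`. -/
theorem debye_layer_voltage_drops (ρ ζ Ap Am φΔi φΔe : ℝ)
    (hρ : 0 < ρ) (hζ : 0 < ζ)
    (hAp : Ap = (Real.sqrt (ρ * (ρ + ζ)) - Real.sqrt (1 + ρ * ζ)) /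
        (Real.sqrt (ρ * (ρ + ζ)) + Real.sqrt (1 + ρ * ζ)))
    (hAm : Am = (Real.sqrt (ρ + ζ) - Real.sqrt (ρ * (1 + ρ * ζ))) /
        (Real.sqrt (ρ + ζ) + Real.sqrt (ρ * (1 + ρ * ζ))))
    (hφi : φΔi = -2 * Real.log ((1 + Am) / (1 - Am)))
    (hφe : φΔe = 2 * Real.log ((1 + Ap) / (1 - Ap))) :
    φΔi + φΔe = 2 * Real.log ρ ∧
    (1 < ρ → 0 < φΔi ∧ 0 < φΔe) ∧
    (ρ < 1 → φΔi < 0 ∧ φΔe < 0) ∧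
    (ρ = 1 → φΔi = 0 ∧ φΔe = 0) := by
  have hs : 0 < ρ + ζ := by positivity
  have ht : 0 < 1 + ρ * ζ := by positivity
  have ha : 0 < ρ * (ρ + ζ) := by positivity
  have hb : 0 < ρ * (1 + ρ * ζ) := by positivity
  have he : φΔe = Real.log (ρ * (ρ + ζ)) - Real.log (1 + ρ * ζ) := by
    rw [hφe, two_mul_log_ratio ha ht hAp]
  have hi : φΔi = Real.log (ρ * (1 + ρ * ζ)) - Real.log (ρ + ζ) := by
    rw [hφi, neg_mul, two_mul_log_ratio hs hb hAm, neg_sub]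
  refine ⟨?_, fun h => ?_, fun h => ?_, fun h => ?_⟩
  · rw [hi, he, Real.log_mul hρ.ne' ht.ne', Real.log_mul hρ.ne' hs.ne']
    ring
  · have hsq : 0 < ρ ^ 2 - 1 := by nlinarith
    have hζsq := mul_pos hζ hsq
    rw [hi, he, sub_pos, sub_pos]
    exact ⟨Real.log_lt_log hs (by linarith), Real.log_lt_log ht (by linarith)⟩
  · have hsq : 0 < 1 - ρ ^ 2 := by nlinarith
    have hζsq := mul_pos hζ hsq
    rw [hi, he, sub_neg, sub_neg]
    exact ⟨Real.log_lt_log hb (by linarith), Real.log_lt_log ha (by linarith)⟩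
  · subst h
    simp [hi, he]
end

section
/- Let μ_i, μ_e, σ_i, σ_e, ε_i, ε_e be positive real numbers and let E, φ^Δ_i, φ^Δ_e, I_J be real numbers. Suppose the real numbers A₁, B₁, C₁, D₁ satisfy the linear system: (1) A₁ + B₁ = C₁ + D₁; (2) −4A₁ − 2B₁ + C₁ − D₁ = −((ε_i/μ_i) φ^Δ_i + (ε_e/μ_e) φ^Δ_e) · 3Eσ_e/(2σ_e + σ_i); (3) −12 μ_i A₁ + μ_e (6C₁ + 12D₁) = (12 σ_e σ_i E/(2σ_e + σ_i)) · ((ε_i/σ_i) φ^Δ_i + (ε_e/σ_e) φ^Δ_e − I_J); (4) −6 μ_i A₁ + 6 μ_e D₁ = (6 σ_e E/(2σ_e + σ_i)) · (ε_i φ^Δ_i + ε_e φ^Δ_e). Then the migration velocity V_mgr = 2(A₁ + B₁) equals [2(5 ε_i σ_e μ_e φ^Δ_i + ε_e (4 σ_i (μ_i + μ_e) − σ_e (μ_i + 2μ_e)) φ^Δ_e) − 8 (μ_i + μ_e) σ_i σ_e I_J] · E / (μ_e (3μ_i + 2μ_e)(2σ_e + σ_i)). -/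
/-!
The four interfacial conditions are linear in `A₁, B₁, C₁, D₁`. After clearing the (positive)
denominators, a single linear combination of them eliminates `C₁` and `D₁` and leaves
`2 * (A₁ + B₁)` multiplied by `μe * (3 * μi + 2 * μe)`; dividing by this positive factor gives the
velocity.
-/

/-- The electromigration velocity of a spherical leaky-dielectric droplet: the
`n = 1` interfacial conditions determine `V_mgr = 2(A₁ + B₁)` explicitly. -/
theorem electromigration_velocity
    (μi μe σi σe εi εe E φΔi φΔe IJ A₁ B₁ C₁ D₁ : ℝ)
    (hμi : 0 < μi) (hμe : 0 < μe) (hσi : 0 < σi) (hσe : 0 < σe)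
    (hεi : 0 < εi) (hεe : 0 < εe)
    (h1 : A₁ + B₁ = C₁ + D₁)
    (h2 : -4 * A₁ - 2 * B₁ + C₁ - D₁ =
      -((εi / μi) * φΔi + (εe / μe) * φΔe) * (3 * E * σe / (2 * σe + σi)))
    (h3 : -12 * μi * A₁ + μe * (6 * C₁ + 12 * D₁) =
      (12 * σe * σi * E / (2 * σe + σi)) *
        ((εi / σi) * φΔi + (εe / σe) * φΔe - IJ))
    (h4 : -6 * μi * A₁ + 6 * μe * D₁ =
      (6 * σe * E / (2 * σe + σi)) * (εi * φΔi + εe * φΔe)) :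
    2 * (A₁ + B₁) =
      (2 * (5 * εi * σe * μe * φΔi +
          εe * (4 * σi * (μi + μe) - σe * (μi + 2 * μe)) * φΔe) -
        8 * (μi + μe) * σi * σe * IJ) * E /
        (μe * (3 * μi + 2 * μe) * (2 * σe + σi)) := by
  have hd : 0 < 2 * σe + σi := by positivity
  have hS : 0 < 3 * μi + 2 * μe := by positivity
  -- `k` absorbs the common denominator `2σe + σi`, which makes the system polynomial.
  obtain ⟨k, rfl⟩ : ∃ k, E = k * (2 * σe + σi) :=
    ⟨E / (2 * σe + σi), by field_simp⟩
  have h2' : μi * μe * (-4 * A₁ - 2 * B₁ + C₁ - D₁) =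
      -(μe * εi * φΔi + μi * εe * φΔe) * (3 * σe * k) := by
    rw [h2]
    field_simp
  have h3' : -12 * μi * A₁ + μe * (6 * C₁ + 12 * D₁) =
      12 * k * (σe * εi * φΔi + σi * εe * φΔe - σe * σi * IJ) := by
    rw [h3]
    field_simp
  have h4' : -6 * μi * A₁ + 6 * μe * D₁ =
      6 * σe * k * (εi * φΔi + εe * φΔe) := by
    rw [h4]
    field_simp
  have key : 2 * (A₁ + B₁) * (μe * (3 * μi + 2 * μe)) =
      (2 * (5 * εi * σe * μe * φΔi +
          εe * (4 * σi * (μi + μe) - σe * (μi + 2 * μe)) * φΔe) -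
        8 * (μi + μe) * σi * σe * IJ) * k := by
    -- The multipliers are the ones for which `C₁` and `D₁` cancel and `A₁`, `B₁`
    -- both get the coefficient `2 * μe * (3 * μi + 2 * μe)`.
    linear_combination 2 * μe * (μi + 2 * μe) * h1 - 2 * h2' +
      2 * (μi + μe) / 3 * h3' - (4 * μi + 2 * μe) / 3 * h4'
  rw [eq_div_iff (by positivity)]
  linear_combination (2 * σe + σi) * key
end
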